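/- Let 1 ≤ n < α, p = 2n/(n+α), q = 2n/(n−α). Then for every nonnegative f ∈ L^p(ℝⁿ), ‖I_α f‖_{L^q(ℝⁿ)} ≥ N*(n, α)·‖f‖_{L^p(ℝⁿ)}, where N*(n, α) = π^{(n−α)/2} · Γ(α/2)/Γ((n+α)/2) · (Γ(n/2)/Γ(n))^{−α/n}. -/

import Mathlib

open MeasureTheory ENNReal

/-- The Riesz-type integral operator `I_α f(x) = ∫_{ℝⁿ} f(y) |x-y|^(α-n) dy` for `α > n`,
valued in `ℝ≥0∞`. -/
noncomputable def rieszNeg (n : ℕ) (α : ℝ) (f : EuclideanSpace ℝ (Fin n) → ℝ)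
    (x : EuclideanSpace ℝ (Fin n)) : ℝ≥0∞ :=
  ∫⁻ y, ENNReal.ofReal (f y * dist x y ^ (α - n))

/-! In stereographic coordinates the kernel becomes a positive power of the chordal distance on
the sphere, and the inequality becomes a lower bound for the energy `∬ F(x) K(x, y) G(y)` at given
`∫ F ^ p` and `∫ G ^ p`, to be attained by constants. Polarizing `F` and `G` by a conformal
reflection of the sphere (an inversion that is not an isometry) lowers the energy, preserves
`∫ F ^ p`, and strictly lowers `∫ F` unless `F` was polarized already. Hence, along a minimizing
sequence of the energy plus `ε ∫ F`, the amount by which `F` fails to be polarized tends to zero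
for every inversion. Applied to two inversions whose radii lie just below and just above that of
an isometric one, this shows that the potentials `K F` become constant, so in the limit the energy
is at least a multiple of `∫ F * ∫ G`, and Hölder's inequality with `p < 1` gives the sharp bound.
Finally let `ε → 0`, and pass from the bilinear inequality to the operator by duality. -/

namespace ReversedHLS

open Filter Topology Set
open scoped NNReal

section Energy

variable {X : Type*} [MeasurableSpace X] {μ : Measure X} {K : X → X → ℝ≥0} {F G : X → ℝ≥0∞}

/-- The potential `x ↦ ∫ K(x, y) F(y) dμ(y)` of a density `F`. -/
noncomputable def potential (μ : Measure X) (K : X → X → ℝ≥0) (F : X → ℝ≥0∞) (x : X) : ℝ≥0∞ :=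
  ∫⁻ y, K x y * F y ∂μ

/-- The mutual energy `∬ F(x) K(x, y) G(y) dμ(y) dμ(x)`, the bilinear form whose sharp lower bound
is the reversed Hardy–Littlewood–Sobolev inequality. -/
noncomputable def energy (μ : Measure X) (K : X → X → ℝ≥0) (F G : X → ℝ≥0∞) : ℝ≥0∞ :=
  ∫⁻ x, F x * potential μ K G x ∂μ

lemma potential_mono (h : F ≤ G) (x : X) : potential μ K F x ≤ potential μ K G x :=
  lintegral_mono fun y => by gcongr; exact h y

lemma energy_mono {F' G' : X → ℝ≥0∞} (hF : F ≤ F') (hG : G ≤ G') :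
    energy μ K F G ≤ energy μ K F' G' :=
  lintegral_mono fun x => mul_le_mul' (hF x) (potential_mono hG x)

lemma measurable_potential [SFinite μ] (hK : Measurable (Function.uncurry K)) (hF : Measurable F) :
    Measurable (potential μ K F) :=
  Measurable.lintegral_prod_right' (f := fun z : X × X => (K z.1 z.2 : ℝ≥0∞) * F z.2)
    (hK.coe_nnreal_ennreal.mul (hF.comp measurable_snd))

lemma measurable_energyDensity (hK : Measurable (Function.uncurry K)) (hF : Measurable F)
    (hG : Measurable G) : Measurable fun z : X × X => F z.1 * G z.2 * K z.1 z.2 :=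
  ((hF.comp measurable_fst).mul (hG.comp measurable_snd)).mul hK.coe_nnreal_ennreal

lemma energy_eq_lintegral_prod [SFinite μ] (hK : Measurable (Function.uncurry K))
    (hF : Measurable F) (hG : Measurable G) :
    energy μ K F G = ∫⁻ z, F z.1 * G z.2 * K z.1 z.2 ∂μ.prod μ := by
  rw [lintegral_prod _ (measurable_energyDensity hK hF hG).aemeasurable]
  refine lintegral_congr fun x => ?_
  rw [potential, ← lintegral_const_mul _ (hK.of_uncurry_left.coe_nnreal_ennreal.fun_mul hG)]
  exact lintegral_congr fun y => by ring

lemma energy_comm [SFinite μ] (hK : Measurable (Function.uncurry K))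
    (hsymm : ∀ᵐ z ∂μ.prod μ, K z.1 z.2 = K z.2 z.1) (hF : Measurable F) (hG : Measurable G) :
    energy μ K F G = energy μ K G F := by
  rw [energy_eq_lintegral_prod hK hF hG, energy_eq_lintegral_prod hK hG hF,
    ← lintegral_prod_swap]
  refine lintegral_congr_ae ?_
  filter_upwards [hsymm] with z hz
  rw [Prod.fst_swap, Prod.snd_swap, hz, mul_comm (F _)]

end Energy

/-- A conformal reflection of the measure `μ` and the kernel `K`: an almost everywhere defined
involution `σ` with conformal factor `κ`, under which `μ` has Jacobian `κ ^ d` and `K` scales with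
weight `l`. The two sides of the reflection are `{κ < 1}` and `{1 < κ}`, and `kernel_le` says that
`K` is smaller between two points of the same side than after reflecting one of them. -/
structure ConformalReflection {X : Type*} [MeasurableSpace X] (μ : Measure X) (K : X → X → ℝ≥0)
    (d l : ℝ) where
  toFun : X → X
  factor : X → ℝ≥0
  domain : Set X
  measurable_toFun : Measurable toFun
  measurable_factor : Measurable factor
  lintegral_eq : ∀ φ : X → ℝ≥0∞, Measurable φ →
    ∫⁻ x, φ x ∂μ = ∫⁻ x, φ (toFun x) * ↑(factor x ^ d) ∂μ
  ae_mem_domain : ∀ᵐ x ∂μ, x ∈ domain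
  mapsTo : MapsTo toFun domain domain
  involutive : ∀ x ∈ domain, toFun (toFun x) = x
  factor_pos : ∀ x ∈ domain, 0 < factor x
  factor_toFun : ∀ x ∈ domain, factor (toFun x) = (factor x)⁻¹
  factor_ne_one : ∀ x ∈ domain, factor x ≠ 1
  kernel_toFun : ∀ x ∈ domain, ∀ y ∈ domain,
    K (toFun x) (toFun y) = factor x ^ l * factor y ^ l * K x y
  kernel_le : ∀ x ∈ domain, ∀ y ∈ domain, (factor x < 1 ↔ factor y < 1) →
    K x y ≤ K x (toFun y) * factor y ^ (-l)

namespace ConformalReflection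

variable {X : Type*} [MeasurableSpace X] {μ : Measure X} {K : X → X → ℝ≥0} {d l : ℝ}
  {F G : X → ℝ≥0∞} {x y : X}

instance : CoeFun (ConformalReflection μ K d l) fun _ => X → X := ⟨toFun⟩

variable (R : ConformalReflection μ K d l)

/-- The kernel between `x` and the reflection of `y`, with the weight that makes it symmetric. -/
noncomputable def reflectedKernel (x y : X) : ℝ≥0 := K x (R y) * R.factor y ^ (-l)

/-- The conformal pullback of a density, with the weight that preserves the energy. -/
noncomputable def pullback (F : X → ℝ≥0∞) (x : X) : ℝ≥0∞ := ↑(R.factor x ^ (d + l)) * F (R x)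

/-- The polarization (two-point rearrangement) of a density: at each pair of reflected points the
larger value is moved to the side `{κ < 1}`. -/
noncomputable def polarize (F : X → ℝ≥0∞) (x : X) : ℝ≥0∞ :=
  if R.factor x < 1 then max (F x) (R.pullback F x) else min (F x) (R.pullback F x)

/-- The amount by which `F` fails to be polarized; it vanishes iff `F = R.polarize F` a.e. -/
noncomputable def defect (F : X → ℝ≥0∞) : ℝ≥0∞ :=
  ∫⁻ x in {x | R.factor x < 1}, (R.pullback F x - F x) ∂μ

lemma measurableSet_factor_lt_one : MeasurableSet {x | R.factor x < 1} :=
  measurableSet_lt R.measurable_factor measurable_const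

lemma measurable_reflectedKernel (hK : Measurable (Function.uncurry K)) :
    Measurable (Function.uncurry R.reflectedKernel) :=
  (hK.comp (measurable_fst.prodMk (R.measurable_toFun.comp measurable_snd))).mul
    ((R.measurable_factor.comp measurable_snd).pow_const _)

lemma measurable_pullback (hF : Measurable F) : Measurable (R.pullback F) :=
  (R.measurable_factor.pow_const _).coe_nnreal_ennreal.mul (hF.comp R.measurable_toFun)

lemma measurable_polarize (hF : Measurable F) : Measurable (R.polarize F) :=
  Measurable.ite R.measurableSet_factor_lt_one (hF.max (R.measurable_pullback hF))
    (hF.min (R.measurable_pullback hF))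

lemma pullback_le_of_factor_lt_one {C : ℝ≥0∞} (hdl : 0 ≤ d + l) (hF : ∀ x, F x ≤ C)
    (hx : R.factor x < 1) : R.pullback F x ≤ C :=
  (mul_le_mul' (coe_le_one_iff.2 (NNReal.rpow_le_one hx.le hdl)) (hF _)).trans_eq (one_mul C)

lemma polarize_le {C : ℝ≥0∞} (hdl : 0 ≤ d + l) (hF : ∀ x, F x ≤ C) (x : X) :
    R.polarize F x ≤ C := by
  unfold polarize
  split_ifs with hx
  · exact max_le (hF x) (R.pullback_le_of_factor_lt_one hdl hF hx)
  · exact (min_le_left _ _).trans (hF x)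

lemma factor_toFun_lt_one_iff (hx : x ∈ R.domain) : R.factor (R x) < 1 ↔ ¬ R.factor x < 1 := by
  rw [R.factor_toFun x hx, inv_lt_one₀ (R.factor_pos x hx), not_lt]
  exact ⟨le_of_lt, fun h => lt_of_le_of_ne h (R.factor_ne_one x hx).symm⟩

lemma coe_factor_rpow_mul_cancel (hx : x ∈ R.domain) (s : ℝ) (a : ℝ≥0∞) :
    ↑(R.factor x ^ s) * (↑(R.factor (R x) ^ s) * a) = a := by
  rw [← mul_assoc, ← ENNReal.coe_mul, ← NNReal.mul_rpow, R.factor_toFun x hx,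
    mul_inv_cancel₀ (R.factor_pos x hx).ne', NNReal.one_rpow, ENNReal.coe_one, one_mul]

lemma pullback_pullback (F : X → ℝ≥0∞) (hx : x ∈ R.domain) :
    R.pullback (R.pullback F) x = F x := by
  rw [pullback, pullback, R.involutive x hx, R.coe_factor_rpow_mul_cancel hx]

lemma pullback_polarize (F : X → ℝ≥0∞) (hx : x ∈ R.domain) :
    R.pullback (R.polarize F) x =
      if R.factor x < 1 then min (F x) (R.pullback F x) else max (F x) (R.pullback F x) := by
  have hswap : ↑(R.factor x ^ (d + l)) * R.pullback F (R x) = F x := R.pullback_pullback F hx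
  have hmax := (mul_right_mono (a := (↑(R.factor x ^ (d + l)) : ℝ≥0∞))).map_max
    (a := F (R x)) (b := R.pullback F (R x))
  have hmin := (mul_right_mono (a := (↑(R.factor x ^ (d + l)) : ℝ≥0∞))).map_min
    (a := F (R x)) (b := R.pullback F (R x))
  by_cases hlt : R.factor x < 1
  · rw [pullback, polarize, if_neg ((R.factor_toFun_lt_one_iff hx).not.2 (not_not.2 hlt)),
      if_pos hlt, hmin, hswap, min_comm, pullback]
  · rw [pullback, polarize, if_pos ((R.factor_toFun_lt_one_iff hx).2 hlt), if_neg hlt, hmax,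
      hswap, max_comm, pullback]

lemma lintegral_mul_eq_pullback (hF : Measurable F) {φ : X → ℝ≥0∞} (hφ : Measurable φ) :
    ∫⁻ y, φ y * F y ∂μ = ∫⁻ y, φ (R y) * ↑(R.factor y ^ (-l)) * R.pullback F y ∂μ := by
  rw [R.lintegral_eq _ (hφ.fun_mul hF)]
  refine lintegral_congr_ae ?_
  filter_upwards [R.ae_mem_domain] with y hy
  have hsplit : R.factor y ^ d = R.factor y ^ (-l) * R.factor y ^ (d + l) := by
    rw [← NNReal.rpow_add (R.factor_pos y hy).ne']; ring_nf
  rw [pullback, hsplit, ENNReal.coe_mul]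
  ring

lemma reflectedKernel_comm (hsymm : ∀ x y, K x y = K y x) (hx : x ∈ R.domain)
    (hy : y ∈ R.domain) : R.reflectedKernel x y = R.reflectedKernel y x := by
  have hconf := R.kernel_toFun x hx (R y) (R.mapsTo hy)
  have hpos : R.factor x ^ l ≠ 0 := (NNReal.rpow_pos (R.factor_pos x hx)).ne'
  rw [R.involutive y hy, R.factor_toFun y hy, NNReal.inv_rpow] at hconf
  rw [reflectedKernel, reflectedKernel, hsymm y, hconf, NNReal.rpow_neg, NNReal.rpow_neg]
  field_simp

lemma reflectedKernel_le (hx : x ∈ R.domain) (hy : y ∈ R.domain)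
    (hside : ¬ (R.factor x < 1 ↔ R.factor y < 1)) : R.reflectedKernel x y ≤ K x y := by
  have hle := R.kernel_le x hx (R y) (R.mapsTo hy) (by
    rw [R.factor_toFun_lt_one_iff hy]; tauto)
  rw [R.involutive y hy, R.factor_toFun y hy] at hle
  calc R.reflectedKernel x y ≤ K x y * (R.factor y)⁻¹ ^ (-l) * R.factor y ^ (-l) := by
        rw [reflectedKernel]; gcongr
    _ = K x y := by
        rw [mul_assoc, ← NNReal.mul_rpow, inv_mul_cancel₀ (R.factor_pos y hy).ne',
          NNReal.one_rpow, mul_one]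

lemma ae_prod_mem_domain [SFinite μ] :
    ∀ᵐ z ∂μ.prod μ, z.1 ∈ R.domain ∧ z.2 ∈ R.domain :=
  (Measure.quasiMeasurePreserving_fst.ae R.ae_mem_domain).and
    (Measure.quasiMeasurePreserving_snd.ae R.ae_mem_domain)

lemma potential_eq_reflectedKernel (hK : Measurable (Function.uncurry K)) (hG : Measurable G)
    (x : X) : potential μ K G x = potential μ R.reflectedKernel (R.pullback G) x := by
  simp only [potential, reflectedKernel, ENNReal.coe_mul]
  exact R.lintegral_mul_eq_pullback hG hK.of_uncurry_left.coe_nnreal_ennreal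

lemma energy_eq_reflectedKernel_right (hK : Measurable (Function.uncurry K)) (hG : Measurable G) :
    energy μ K F G = energy μ R.reflectedKernel F (R.pullback G) :=
  lintegral_congr fun x => by rw [R.potential_eq_reflectedKernel hK hG]

lemma energy_eq_reflectedKernel_left [SFinite μ] (hK : Measurable (Function.uncurry K))
    (hsymm : ∀ x y, K x y = K y x) (hF : Measurable F) (hG : Measurable G) :
    energy μ K F G = energy μ R.reflectedKernel (R.pullback F) G := by
  rw [energy_comm hK (Eventually.of_forall fun z => hsymm z.1 z.2) hF hG,
    R.energy_eq_reflectedKernel_right hK hF,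
    energy_comm (R.measurable_reflectedKernel hK) _ hG (R.measurable_pullback hF)]
  filter_upwards [R.ae_prod_mem_domain] with z hz
  exact R.reflectedKernel_comm hsymm hz.1 hz.2

lemma energy_pullback [SFinite μ] (hK : Measurable (Function.uncurry K))
    (hsymm : ∀ x y, K x y = K y x) (hF : Measurable F) (hG : Measurable G) :
    energy μ K (R.pullback F) (R.pullback G) = energy μ K F G := by
  rw [R.energy_eq_reflectedKernel_left hK hsymm (R.measurable_pullback hF)
    (R.measurable_pullback hG), R.energy_eq_reflectedKernel_right hK hG]
  refine lintegral_congr_ae ?_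
  filter_upwards [R.ae_mem_domain] with x hx
  rw [R.pullback_pullback F hx]

/-- The integrand obtained by averaging the energy over reflections of either argument. -/
noncomputable def fourPointEnergy (F G : X → ℝ≥0∞) (z : X × X) : ℝ≥0∞ :=
  F z.1 * G z.2 * K z.1 z.2 + F z.1 * R.pullback G z.2 * R.reflectedKernel z.1 z.2 +
    R.pullback F z.1 * G z.2 * R.reflectedKernel z.1 z.2 +
    R.pullback F z.1 * R.pullback G z.2 * K z.1 z.2

lemma four_mul_energy [SFinite μ] (hK : Measurable (Function.uncurry K))
    (hsymm : ∀ x y, K x y = K y x) (hF : Measurable F) (hG : Measurable G) :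
    4 * energy μ K F G = ∫⁻ z, R.fourPointEnergy F G z ∂μ.prod μ := by
  have hF' := R.measurable_pullback hF
  have hG' := R.measurable_pullback hG
  have hK' := R.measurable_reflectedKernel hK
  unfold fourPointEnergy
  rw [lintegral_add_right _ (measurable_energyDensity hK hF' hG'),
    lintegral_add_right _ (measurable_energyDensity hK' hF' hG),
    lintegral_add_right _ (measurable_energyDensity hK' hF hG'),
    ← energy_eq_lintegral_prod hK hF hG, ← energy_eq_lintegral_prod hK' hF hG',
    ← energy_eq_lintegral_prod hK' hF' hG, ← energy_eq_lintegral_prod hK hF' hG',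
    ← R.energy_eq_reflectedKernel_right hK hG, ← R.energy_eq_reflectedKernel_left hK hsymm hF hG,
    R.energy_pullback hK hsymm hF hG]
  ring

end ConformalReflection

lemma max_mul_max_add_four_le {R : Type*} [CommSemiring R] [LinearOrder R] [CanonicallyOrderedAdd R]
    {f f' g g' k k' : R} (hk : k ≤ k') :
    max f f' * max g g' * k + max f f' * min g g' * k' + min f f' * max g g' * k' +
        min f f' * min g g' * k ≤
      f * g * k + f * g' * k' + f' * g * k' + f' * g' * k := by
  obtain ⟨c, rfl⟩ := exists_add_of_le hk
  rcases le_total f f' with hf | hf <;> rcases le_total g g' with hg | hg <;>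
    simp only [max_eq_left, max_eq_right, min_eq_left, min_eq_right, hf, hg] <;>
    obtain ⟨u, rfl⟩ := exists_add_of_le hf <;> obtain ⟨v, rfl⟩ := exists_add_of_le hg
  · exact le_of_eq (by ring)
  · exact (le_self_add (b := u * v * c)).trans_eq (by ring)
  · exact (le_self_add (b := u * v * c)).trans_eq (by ring)
  · exact le_of_eq (by ring)

lemma max_mul_min_add_four_le {R : Type*} [CommSemiring R] [LinearOrder R] [CanonicallyOrderedAdd R]
    {f f' g g' k k' : R} (hk : k' ≤ k) :
    max f f' * min g g' * k + max f f' * max g g' * k' + min f f' * min g g' * k' +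
        min f f' * max g g' * k ≤
      f * g * k + f * g' * k' + f' * g * k' + f' * g' * k := by
  have hswap := max_mul_max_add_four_le (f := f) (f' := f') (g := g') (g' := g) hk
  rw [max_comm g', min_comm g'] at hswap
  exact (hswap.trans_eq' (by ring)).trans_eq (by ring)

lemma max_add_min_mul_add_le {t f f' : ℝ≥0∞} (ht : 1 ≤ t) :
    max f f' + min f f' * t + (t - 1) * (f' - f) ≤ f + f' * t := by
  obtain ⟨c, rfl⟩ := exists_add_of_le ht
  rcases le_total f f' with hf | hf
  · obtain ⟨u, rfl⟩ := exists_add_of_le hf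
    rw [max_eq_right hf, min_eq_left hf]
    calc f + u + f * (1 + c) + (1 + c - 1) * (f + u - f) ≤ f + u + f * (1 + c) + c * u := by
          gcongr <;> exact add_tsub_le_left
      _ = f + (f + u) * (1 + c) := by ring
  · rw [max_eq_left hf, min_eq_right hf, tsub_eq_zero_of_le hf, mul_zero, add_zero]

lemma min_add_max_mul_le {t f f' : ℝ≥0∞} (ht : t ≤ 1) :
    min f f' + max f f' * t ≤ f + f' * t := by
  rcases le_total f f' with hf | hf
  · rw [max_eq_right hf, min_eq_left hf]
  · obtain ⟨u, rfl⟩ := exists_add_of_le hf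
    rw [max_eq_left hf, min_eq_right hf]
    calc f' + (f' + u) * t = f' + f' * t + u * t := by ring
      _ ≤ f' + f' * t + u * 1 := by gcongr
      _ = f' + u + f' * t := by ring

namespace ConformalReflection

variable {X : Type*} [MeasurableSpace X] {μ : Measure X} {K : X → X → ℝ≥0} {d l p : ℝ}
  {F G : X → ℝ≥0∞} (R : ConformalReflection μ K d l)

lemma fourPointEnergy_polarize_le {z : X × X} (hx : z.1 ∈ R.domain) (hy : z.2 ∈ R.domain) :
    R.fourPointEnergy (R.polarize F) (R.polarize G) z ≤ R.fourPointEnergy F G z := by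
  have hsame : _ → (K z.1 z.2 : ℝ≥0∞) ≤ R.reflectedKernel z.1 z.2 :=
    fun h => ENNReal.coe_le_coe.2 (R.kernel_le z.1 hx z.2 hy h)
  have hopp := fun h => ENNReal.coe_le_coe.2 (R.reflectedKernel_le hx hy h)
  rw [fourPointEnergy, R.pullback_polarize F hx, R.pullback_polarize G hy, polarize, polarize]
  by_cases hx1 : R.factor z.1 < 1 <;> by_cases hy1 : R.factor z.2 < 1 <;>
    simp only [hx1, hy1, if_true, if_false, true_iff, iff_true, not_true, not_false_iff,
      forall_const] at hsame hopp ⊢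
  · exact max_mul_max_add_four_le hsame
  · exact max_mul_min_add_four_le hopp
  · exact (max_mul_min_add_four_le hopp).trans_eq' (by ring)
  · exact (max_mul_max_add_four_le hsame).trans_eq' (by ring)

lemma energy_polarize_le [SFinite μ] (hK : Measurable (Function.uncurry K))
    (hsymm : ∀ x y, K x y = K y x) (hF : Measurable F) (hG : Measurable G) :
    energy μ K (R.polarize F) (R.polarize G) ≤ energy μ K F G := by
  rw [← ENNReal.mul_le_mul_iff_right (a := 4) (by norm_num) (by norm_num),
    R.four_mul_energy hK hsymm hF hG,
    R.four_mul_energy hK hsymm (R.measurable_polarize hF) (R.measurable_polarize hG)]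
  refine lintegral_mono_ae ?_
  filter_upwards [R.ae_prod_mem_domain] with z hz
  exact R.fourPointEnergy_polarize_le hz.1 hz.2

lemma two_mul_lintegral_rpow (hp : 0 ≤ p) (hpd : (d + l) * p = d) (hF : Measurable F) :
    2 * ∫⁻ x, F x ^ p ∂μ = ∫⁻ x, (F x ^ p + R.pullback F x ^ p) ∂μ := by
  rw [lintegral_add_left (hF.pow_const p), two_mul]
  congr 1
  rw [R.lintegral_eq _ (hF.pow_const p)]
  refine lintegral_congr fun x => ?_
  rw [pullback, ENNReal.mul_rpow_of_nonneg _ _ hp, ← ENNReal.coe_rpow_of_nonneg _ hp,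
    ← NNReal.rpow_mul, hpd, mul_comm]

lemma lintegral_polarize_rpow (hp : 0 ≤ p) (hpd : (d + l) * p = d) (hF : Measurable F) :
    ∫⁻ x, R.polarize F x ^ p ∂μ = ∫⁻ x, F x ^ p ∂μ := by
  rw [← ENNReal.mul_right_inj (a := 2) (by norm_num) (by norm_num),
    R.two_mul_lintegral_rpow hp hpd hF,
    R.two_mul_lintegral_rpow hp hpd (R.measurable_polarize hF)]
  refine lintegral_congr_ae ?_
  filter_upwards [R.ae_mem_domain] with x hx
  rw [R.pullback_polarize F hx, polarize]
  split_ifs <;> rcases le_total (F x) (R.pullback F x) with hle | hle <;>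
    simp only [hle, max_eq_left, max_eq_right, min_eq_left, min_eq_right, add_comm]

lemma two_mul_lintegral (hF : Measurable F) :
    2 * ∫⁻ x, F x ∂μ = ∫⁻ x, (F x + R.pullback F x * ↑(R.factor x ^ (-l))) ∂μ := by
  have hreflect := R.lintegral_mul_eq_pullback hF (φ := 1) measurable_const
  simp only [Pi.one_apply, one_mul] at hreflect
  rw [lintegral_add_left hF, two_mul]
  congr 1
  simp only [hreflect, mul_comm]

lemma one_le_factor_rpow_neg (hl : 0 ≤ l) {x : X} (hx : x ∈ R.domain) (hlt : R.factor x < 1) :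
    1 ≤ R.factor x ^ (-l) :=
  NNReal.one_le_rpow_of_pos_of_le_one_of_nonpos (R.factor_pos x hx) hlt.le (neg_nonpos.2 hl)

lemma two_mul_lintegral_polarize_add_le (hl : 0 ≤ l) (hF : Measurable F) :
    2 * ∫⁻ x, R.polarize F x ∂μ +
        ∫⁻ x in {x | R.factor x < 1}, (↑(R.factor x ^ (-l)) - 1) * (R.pullback F x - F x) ∂μ ≤
      2 * ∫⁻ x, F x ∂μ := by
  have hPF := R.measurable_polarize hF
  rw [R.two_mul_lintegral hF, R.two_mul_lintegral hPF,
    ← lintegral_indicator R.measurableSet_factor_lt_one, ← lintegral_add_left]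
  swap
  · exact hPF.add ((R.measurable_pullback hPF).mul
      (R.measurable_factor.pow_const _).coe_nnreal_ennreal)
  refine lintegral_mono_ae ?_
  filter_upwards [R.ae_mem_domain] with x hx
  rw [R.pullback_polarize F hx, polarize]
  by_cases hlt : R.factor x < 1
  · rw [indicator_of_mem (by exact hlt), if_pos hlt, if_pos hlt]
    exact max_add_min_mul_add_le (one_le_coe_iff.2 (R.one_le_factor_rpow_neg hl hx hlt))
  · rw [indicator_of_notMem (by exact hlt), if_neg hlt, if_neg hlt, add_zero]
    exact min_add_max_mul_le (coe_le_one_iff.2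
      (NNReal.rpow_le_one_of_one_le_of_nonpos (not_lt.1 hlt) (neg_nonpos.2 hl)))

end ConformalReflection

lemma tendsto_measure_nat_mul_lt_one {X : Type*} [MeasurableSpace X] {μ : Measure X}
    [IsFiniteMeasure μ] {W : X → ℝ≥0∞} (hW : Measurable W) (hW0 : ∀ᵐ x ∂μ, W x ≠ 0) :
    Tendsto (fun j : ℕ => μ {x | j * W x < 1}) atTop (𝓝 0) := by
  have hnull : μ (⋂ j : ℕ, {x | j * W x < 1}) = 0 := by
    refine measure_mono_null (fun x hx => ?_) hW0
    intro hx0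
    obtain ⟨j, hj⟩ := ENNReal.exists_nat_mul_gt hx0 one_ne_top
    exact lt_asymm hj (mem_iInter.1 hx j)
  rw [← hnull]
  refine tendsto_measure_iInter_atTop
    (fun j => (measurableSet_lt (hW.const_mul _) measurable_const).nullMeasurableSet)
    (fun i j hij x (hx : _ < _) => lt_of_le_of_lt (b := j * W x) ?_ hx) ⟨0, measure_ne_top _ _⟩
  gcongr

lemma tendsto_lintegral_of_tendsto_weighted {X : Type*} [MeasurableSpace X] {μ : Measure X}
    [IsFiniteMeasure μ] {W : X → ℝ≥0∞} {D : ℕ → X → ℝ≥0∞} {C : ℝ≥0}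
    (hW : Measurable W) (hW0 : ∀ᵐ x ∂μ, W x ≠ 0) (hC : ∀ k, ∀ᵐ x ∂μ, D k x ≤ C)
    (hlim : Tendsto (fun k => ∫⁻ x, W x * D k x ∂μ) atTop (𝓝 0)) :
    Tendsto (fun k => ∫⁻ x, D k x ∂μ) atTop (𝓝 0) := by
  have hsplit (j k : ℕ) :
      ∫⁻ x, D k x ∂μ ≤ j * ∫⁻ x, W x * D k x ∂μ + C * μ {x | j * W x < 1} := by
    have hmeas : MeasurableSet {x | j * W x < 1} :=
      measurableSet_lt (hW.const_mul _) measurable_const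
    rw [← lintegral_const_mul' _ _ (natCast_ne_top j), ← lintegral_indicator_const hmeas,
      ← lintegral_add_right _ (measurable_const.indicator hmeas)]
    refine lintegral_mono_ae ?_
    filter_upwards [hC k] with x hx
    by_cases hlt : j * W x < 1
    · rw [indicator_of_mem (by exact hlt)]
      exact hx.trans le_add_self
    · calc D k x ≤ j * W x * D k x := le_mul_of_one_le_left' (not_lt.1 hlt)
        _ ≤ _ := by rw [mul_assoc]; exact le_self_add
  have hsmall := ENNReal.Tendsto.const_mul (tendsto_measure_nat_mul_lt_one hW hW0)
    (Or.inr (coe_ne_top (r := C)))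
  rw [mul_zero, ENNReal.tendsto_nhds_zero] at hsmall
  rw [ENNReal.tendsto_nhds_zero]
  intro η hη
  obtain ⟨j, hj⟩ := (hsmall (η / 2) (ENNReal.half_pos hη.ne')).exists
  have hweighted := ENNReal.Tendsto.const_mul hlim (Or.inr (natCast_ne_top j))
  rw [mul_zero, ENNReal.tendsto_nhds_zero] at hweighted
  filter_upwards [hweighted (η / 2) (ENNReal.half_pos hη.ne')] with k hk
  exact (hsplit j k).trans ((add_le_add hk hj).trans_eq (ENNReal.add_halves η))

section Minimization

variable {X : Type*} [MeasurableSpace X] {μ : Measure X} {K : X → X → ℝ≥0} {d l p : ℝ}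

/-- The densities bounded by `C` whose `p`-th power has integral `A`. -/
def admissible (μ : Measure X) (p : ℝ) (C : ℝ≥0) (A : ℝ≥0∞) : Set (X → ℝ≥0∞) :=
  {F | Measurable F ∧ (∀ x, F x ≤ C) ∧ ∫⁻ x, F x ^ p ∂μ = A}

/-- The energy with a linear penalty, which polarization strictly decreases. -/
noncomputable def penalizedEnergy (μ : Measure X) (K : X → X → ℝ≥0) (ε : ℝ≥0∞)
    (F G : X → ℝ≥0∞) : ℝ≥0∞ :=
  energy μ K F G + ε * ∫⁻ x, F x ∂μ

/-- Pairs of admissible densities along which the penalized energy tends to its finite infimum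
`m`. -/
structure IsMinimizingSeq (μ : Measure X) (K : X → X → ℝ≥0) (p : ℝ) (C : ℝ≥0) (ε A B : ℝ≥0∞)
    (F G : ℕ → X → ℝ≥0∞) (m : ℝ≥0∞) : Prop where
  left_mem : ∀ k, F k ∈ admissible μ p C A
  right_mem : ∀ k, G k ∈ admissible μ p C B
  le_penalizedEnergy : ∀ F ∈ admissible μ p C A, ∀ G ∈ admissible μ p C B,
    m ≤ penalizedEnergy μ K ε F G
  ne_top : m ≠ ∞
  tendsto : Tendsto (fun k => penalizedEnergy μ K ε (F k) (G k)) atTop (𝓝 m)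

/-- The regularity assumptions on an interaction kernel. -/
structure IsBoundedSymmKernel (K : X → X → ℝ≥0) (D : ℝ≥0) : Prop where
  measurable : Measurable (Function.uncurry K)
  symm : ∀ x y, K x y = K y x
  le : ∀ x y, K x y ≤ D

variable {C D : ℝ≥0} {ε A B : ℝ≥0∞}

lemma exists_isMinimizingSeq {F₀ G₀ : X → ℝ≥0∞} (hF₀ : F₀ ∈ admissible μ p C A)
    (hG₀ : G₀ ∈ admissible μ p C B) (hfin : penalizedEnergy μ K ε F₀ G₀ ≠ ∞) :
    ∃ F G m, IsMinimizingSeq μ K p C ε A B F G m ∧ m ≤ penalizedEnergy μ K ε F₀ G₀ := by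
  let s := image2 (penalizedEnergy μ K ε) (admissible μ p C A) (admissible μ p C B)
  have hmem : penalizedEnergy μ K ε F₀ G₀ ∈ s := mem_image2_of_mem hF₀ hG₀
  obtain ⟨u, -, hu, hus⟩ := exists_seq_tendsto_sInf ⟨_, hmem⟩ (OrderBot.bddBelow s)
  choose F hF G hG hFG using hus
  refine ⟨F, G, sInf s, ⟨hF, hG, fun F hF G hG => sInf_le (mem_image2_of_mem hF hG),
    ne_top_of_le_ne_top hfin (sInf_le hmem), ?_⟩, sInf_le hmem⟩
  simpa only [hFG] using hu

namespace ConformalReflection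

variable (R : ConformalReflection μ K d l)

lemma polarize_mem_admissible (hdl : 0 ≤ d + l) (hp : 0 ≤ p) (hpd : (d + l) * p = d)
    {F : X → ℝ≥0∞} (hF : F ∈ admissible μ p C A) : R.polarize F ∈ admissible μ p C A :=
  ⟨R.measurable_polarize hF.1, R.polarize_le hdl hF.2.1,
    (R.lintegral_polarize_rpow hp hpd hF.1).trans hF.2.2⟩

lemma two_mul_add_defect_le_penalizedEnergy [SFinite μ] (hK : IsBoundedSymmKernel K D)
    (hdl : 0 ≤ d + l) (hl : 0 ≤ l) (hp : 0 ≤ p) (hpd : (d + l) * p = d)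
    {F G : ℕ → X → ℝ≥0∞} {m : ℝ≥0∞} (hmin : IsMinimizingSeq μ K p C ε A B F G m) (k : ℕ) :
    2 * m + ε * ∫⁻ x in {x | R.factor x < 1},
        (↑(R.factor x ^ (-l)) - 1) * (R.pullback (F k) x - F k x) ∂μ ≤
      2 * penalizedEnergy μ K ε (F k) (G k) := by
  have hF := hmin.left_mem k
  have hG := hmin.right_mem k
  have hm := hmin.le_penalizedEnergy _ (R.polarize_mem_admissible hdl hp hpd hF) _
    (R.polarize_mem_admissible hdl hp hpd hG)
  have henergy := R.energy_polarize_le hK.measurable hK.symm hF.1 hG.1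
  have hgain := R.two_mul_lintegral_polarize_add_le hl hF.1
  unfold penalizedEnergy at hm ⊢
  set I := ∫⁻ x in {x | R.factor x < 1},
    (↑(R.factor x ^ (-l)) - 1) * (R.pullback (F k) x - F k x) ∂μ
  calc 2 * m + ε * I
      ≤ 2 * (energy μ K (R.polarize (F k)) (R.polarize (G k)) +
          ε * ∫⁻ x, R.polarize (F k) x ∂μ) + ε * I := by gcongr
    _ = 2 * energy μ K (R.polarize (F k)) (R.polarize (G k)) +
          ε * (2 * ∫⁻ x, R.polarize (F k) x ∂μ + I) := by ring
    _ ≤ 2 * energy μ K (F k) (G k) + ε * (2 * ∫⁻ x, F k x ∂μ) := by gcongr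
    _ = 2 * (energy μ K (F k) (G k) + ε * ∫⁻ x, F k x ∂μ) := by ring

lemma tendsto_weighted_defect [SFinite μ] (hK : IsBoundedSymmKernel K D)
    (hdl : 0 ≤ d + l) (hl : 0 ≤ l) (hp : 0 ≤ p) (hpd : (d + l) * p = d) (hε : ε ≠ 0) (hε' : ε ≠ ∞)
    {F G : ℕ → X → ℝ≥0∞} {m : ℝ≥0∞} (hmin : IsMinimizingSeq μ K p C ε A B F G m) :
    Tendsto (fun k => ∫⁻ x in {x | R.factor x < 1},
      (↑(R.factor x ^ (-l)) - 1) * (R.pullback (F k) x - F k x) ∂μ) atTop (𝓝 0) := by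
  have hm := hmin.ne_top
  have hexcess : Tendsto (fun k => (2 * penalizedEnergy μ K ε (F k) (G k) - 2 * m) / ε) atTop
      (𝓝 ((2 * m - 2 * m) / ε)) :=
    ENNReal.Tendsto.div_const (ENNReal.Tendsto.sub
      (ENNReal.Tendsto.const_mul hmin.tendsto (Or.inr ofNat_ne_top)) tendsto_const_nhds
      (Or.inl (by finiteness))) (Or.inr hε)
  rw [tsub_self, ENNReal.zero_div] at hexcess
  refine tendsto_of_tendsto_of_tendsto_of_le_of_le tendsto_const_nhds hexcess
    (fun k => zero_le) fun k => ?_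
  dsimp only
  rw [ENNReal.le_div_iff_mul_le (Or.inl hε) (Or.inl hε'), mul_comm]
  exact ENNReal.le_sub_of_add_le_left (by finiteness)
    (R.two_mul_add_defect_le_penalizedEnergy hK hdl hl hp hpd hmin k)

lemma tendsto_defect [IsFiniteMeasure μ] (hK : IsBoundedSymmKernel K D)
    (hdl : 0 ≤ d + l) (hl : 0 < l) (hp : 0 ≤ p) (hpd : (d + l) * p = d) (hε : ε ≠ 0) (hε' : ε ≠ ∞)
    {F G : ℕ → X → ℝ≥0∞} {m : ℝ≥0∞} (hmin : IsMinimizingSeq μ K p C ε A B F G m) :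
    Tendsto (fun k => R.defect (F k)) atTop (𝓝 0) := by
  have hside := ae_restrict_mem (μ := μ) R.measurableSet_factor_lt_one
  refine tendsto_lintegral_of_tendsto_weighted (C := C)
    ((R.measurable_factor.pow_const (-l)).coe_nnreal_ennreal.sub_const 1) ?_ (fun k => ?_)
    (R.tendsto_weighted_defect hK hdl hl.le hp hpd hε hε' hmin)
  · filter_upwards [ae_restrict_of_ae R.ae_mem_domain, hside] with x hx hlt
    refine (tsub_pos_of_lt (one_lt_coe_iff.2 ?_)).ne'
    exact NNReal.one_lt_rpow_of_pos_of_lt_one_of_neg (R.factor_pos x hx) hlt (neg_lt_zero.2 hl)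
  · filter_upwards [hside] with x hlt
    exact tsub_le_self.trans (R.pullback_le_of_factor_lt_one hdl (hmin.left_mem k).2.1 hlt)

/-- The reflected kernel, restricted in the second variable to the side `{1 < κ}`. -/
noncomputable def outerKernel (x y : X) : ℝ≥0 :=
  {y | 1 < R.factor y}.indicator (R.reflectedKernel x) y

lemma measurable_outerKernel (hK : Measurable (Function.uncurry K)) (x : X) :
    Measurable (R.outerKernel x) :=
  ((R.measurable_reflectedKernel hK).of_uncurry_left).indicator
    (measurableSet_lt measurable_const R.measurable_factor)

lemma potential_outerKernel (hK : Measurable (Function.uncurry K)) {F : X → ℝ≥0∞}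
    (hF : Measurable F) (x : X) :
    potential μ R.outerKernel F x =
      ∫⁻ y in {y | R.factor y < 1}, K x y * R.pullback F y ∂μ := by
  rw [potential, R.lintegral_mul_eq_pullback hF (R.measurable_outerKernel hK x).coe_nnreal_ennreal,
    ← lintegral_indicator R.measurableSet_factor_lt_one]
  refine lintegral_congr_ae ?_
  filter_upwards [R.ae_mem_domain] with y hy
  have hfactor : 1 < R.factor (R y) ↔ R.factor y < 1 := by
    rw [R.factor_toFun y hy, one_lt_inv₀ (R.factor_pos y hy)]
  by_cases hlt : R.factor y < 1
  · rw [outerKernel, indicator_of_mem (by exact hfactor.2 hlt), indicator_of_mem (by exact hlt),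
      reflectedKernel, R.involutive y hy, R.factor_toFun y hy, ← ENNReal.coe_mul, mul_assoc (K x y),
      ← NNReal.mul_rpow, inv_mul_cancel₀ (R.factor_pos y hy).ne', NNReal.one_rpow, mul_one]
  · rw [outerKernel, indicator_of_notMem (by exact hfactor.not.2 hlt),
      indicator_of_notMem (by exact hlt), ENNReal.coe_zero, zero_mul, zero_mul]

lemma potential_outerKernel_le (hK : IsBoundedSymmKernel K D) {F : X → ℝ≥0∞} (hF : Measurable F)
    (x : X) : potential μ R.outerKernel F x ≤
      ∫⁻ y in {y | R.factor y < 1}, K x y * F y ∂μ + D * R.defect F := by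
  rw [R.potential_outerKernel hK.measurable hF, defect, ← lintegral_const_mul' _ _ coe_ne_top,
    ← lintegral_add_left (hK.measurable.of_uncurry_left.coe_nnreal_ennreal.fun_mul hF)]
  refine lintegral_mono fun y => ?_
  calc K x y * R.pullback F y ≤ K x y * (F y + (R.pullback F y - F y)) := by
        gcongr; exact le_add_tsub
    _ = K x y * F y + K x y * (R.pullback F y - F y) := mul_add _ _ _
    _ ≤ _ := by gcongr; exact hK.le x y

end ConformalReflection

/-- The isometry of `K` carrying `x'` to `x` is approximated by a pair of reflections of `x` whose
inner sides are almost disjoint: the reflected kernels cover `K x'` up to an arbitrarily small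
error. -/
def ApproxReflected (μ : Measure X) (K : X → X → ℝ≥0) (d l : ℝ) (x x' : X) : Prop :=
  ∀ η : ℝ≥0∞, η ≠ 0 → ∃ R₁ R₂ : ConformalReflection μ K d l,
    ∫⁻ y, (K x' y - (R₁.outerKernel x y + R₂.outerKernel x y) : ℝ≥0∞) ∂μ ≤ η ∧
      μ ({y | R₁.factor y < 1} ∩ {y | R₂.factor y < 1}) ≤ η

lemma setLIntegral_add_setLIntegral_le {s t : Set X} (ht : MeasurableSet t) {f : X → ℝ≥0∞}
    {M : ℝ≥0∞} (hf : ∀ x, f x ≤ M) :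
    ∫⁻ x in s, f x ∂μ + ∫⁻ x in t, f x ∂μ ≤ ∫⁻ x, f x ∂μ + M * μ (s ∩ t) := by
  rw [← lintegral_add_measure, ← Measure.restrict_union_add_inter s ht, lintegral_add_measure]
  refine add_le_add (lintegral_mono' Measure.restrict_le_self le_rfl) ?_
  exact (lintegral_mono hf).trans_eq (by rw [lintegral_const, Measure.restrict_apply_univ])

lemma potential_le_potential_add_defect (hK : IsBoundedSymmKernel K D) {F : X → ℝ≥0∞}
    (hF : Measurable F) (hFC : ∀ x, F x ≤ C) (R₁ R₂ : ConformalReflection μ K d l) (x x' : X) :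
    potential μ K F x' ≤ potential μ K F x + D * (R₁.defect F + R₂.defect F) +
      (D * C * μ ({y | R₁.factor y < 1} ∩ {y | R₂.factor y < 1}) +
        C * ∫⁻ y, (K x' y - (R₁.outerKernel x y + R₂.outerKernel x y) : ℝ≥0∞) ∂μ) := by
  have hmeas (R : ConformalReflection μ K d l) : Measurable fun y => (R.outerKernel x y : ℝ≥0∞) :=
    (R.measurable_outerKernel hK.measurable x).coe_nnreal_ennreal
  have hcover : potential μ K F x' ≤
      potential μ R₁.outerKernel F x + potential μ R₂.outerKernel F x +
        C * ∫⁻ y, (K x' y - (R₁.outerKernel x y + R₂.outerKernel x y) : ℝ≥0∞) ∂μ := by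
    unfold potential
    rw [← lintegral_add_left ((hmeas R₁).fun_mul hF), ← lintegral_const_mul' _ _ coe_ne_top,
      ← lintegral_add_left (((hmeas R₁).fun_mul hF).fun_add ((hmeas R₂).fun_mul hF))]
    refine lintegral_mono fun y => ?_
    calc K x' y * F y ≤ (R₁.outerKernel x y + R₂.outerKernel x y +
          (K x' y - (R₁.outerKernel x y + R₂.outerKernel x y))) * F y := by
          gcongr; exact le_add_tsub
      _ = R₁.outerKernel x y * F y + R₂.outerKernel x y * F y +
          F y * (K x' y - (R₁.outerKernel x y + R₂.outerKernel x y)) := by ring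
      _ ≤ _ := by gcongr; exact hFC y
  have hoverlap := setLIntegral_add_setLIntegral_le (μ := μ) (s := {y | R₁.factor y < 1})
    R₂.measurableSet_factor_lt_one (f := fun y => K x y * F y) (M := D * C)
    fun y => mul_le_mul' (coe_le_coe.2 (hK.le x y)) (hFC y)
  have hinner₁ := R₁.potential_outerKernel_le hK hF x
  have hinner₂ := R₂.potential_outerKernel_le hK hF x
  refine hcover.trans ?_
  calc _ ≤ _ := add_le_add_left (add_le_add hinner₁ hinner₂) _
    _ = (∫⁻ y in {y | R₁.factor y < 1}, K x y * F y ∂μ +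
          ∫⁻ y in {y | R₂.factor y < 1}, K x y * F y ∂μ) + D * (R₁.defect F + R₂.defect F) +
          C * ∫⁻ y, (K x' y - (R₁.outerKernel x y + R₂.outerKernel x y) : ℝ≥0∞) ∂μ := by ring
    _ ≤ _ := add_le_add_left (add_le_add_left hoverlap _) _
    _ = _ := by rw [potential]; ring

lemma tendsto_potential_sub_potential [IsFiniteMeasure μ] (hK : IsBoundedSymmKernel K D)
    (hdl : 0 ≤ d + l) (hl : 0 < l) (hp : 0 ≤ p) (hpd : (d + l) * p = d) (hε : ε ≠ 0) (hε' : ε ≠ ∞)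
    {F G : ℕ → X → ℝ≥0∞} {m : ℝ≥0∞} (hmin : IsMinimizingSeq μ K p C ε A B F G m) {x x' : X}
    (hxx' : ApproxReflected μ K d l x x') :
    Tendsto (fun k => potential μ K (F k) x' - potential μ K (F k) x) atTop (𝓝 0) := by
  rw [ENNReal.tendsto_nhds_zero]
  intro δ hδ
  obtain ⟨η, hη, hηδ⟩ : ∃ η : ℝ≥0∞, η ≠ 0 ∧ D * C * η + C * η ≤ δ / 2 := by
    have hlim : Tendsto (fun η : ℝ≥0∞ => D * C * η + C * η) (𝓝[>] 0) (𝓝 (D * C * 0 + C * 0)) :=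
      ((ENNReal.Tendsto.const_mul tendsto_id (Or.inr (by finiteness))).add
        (ENNReal.Tendsto.const_mul tendsto_id (Or.inr (by finiteness)))).mono_left
          nhdsWithin_le_nhds
    rw [mul_zero, mul_zero, add_zero, ENNReal.tendsto_nhds_zero] at hlim
    obtain ⟨η, hη, hle⟩ :=
      (eventually_mem_nhdsWithin.and (hlim _ (ENNReal.half_pos hδ.ne'))).exists
    exact ⟨η, ne_of_gt hη, hle⟩
  obtain ⟨R₁, R₂, hcover, hoverlap⟩ := hxx' η hη
  have hdefect := ENNReal.Tendsto.const_mul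
    ((R₁.tendsto_defect hK hdl hl hp hpd hε hε' hmin).add
      (R₂.tendsto_defect hK hdl hl hp hpd hε hε' hmin)) (Or.inr (coe_ne_top (r := D)))
  rw [add_zero, mul_zero, ENNReal.tendsto_nhds_zero] at hdefect
  filter_upwards [hdefect (δ / 2) (ENNReal.half_pos hδ.ne')] with k hk
  rw [tsub_le_iff_left]
  obtain ⟨hFm, hFC, -⟩ := hmin.left_mem k
  calc potential μ K (F k) x' ≤ _ := potential_le_potential_add_defect hK hFm hFC R₁ R₂ x x'
    _ ≤ potential μ K (F k) x + δ / 2 + (D * C * η + C * η) := by gcongr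
    _ ≤ potential μ K (F k) x + δ / 2 + δ / 2 := by gcongr
    _ = potential μ K (F k) x + δ := by rw [add_assoc, ENNReal.add_halves]

lemma lintegral_le_of_le {F : X → ℝ≥0∞} {M : ℝ≥0∞} (hF : ∀ x, F x ≤ M) :
    ∫⁻ x, F x ∂μ ≤ M * μ univ :=
  (lintegral_mono hF).trans_eq (lintegral_const M)

lemma IsBoundedSymmKernel.potential_le (hK : IsBoundedSymmKernel K D) {F : X → ℝ≥0∞}
    (hFC : ∀ x, F x ≤ C) (x : X) : potential μ K F x ≤ D * C * μ univ :=
  lintegral_le_of_le fun y => mul_le_mul' (coe_le_coe.2 (hK.le x y)) (hFC y)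

lemma penalizedEnergy_ne_top [IsFiniteMeasure μ] (hK : IsBoundedSymmKernel K D) (hε : ε ≠ ∞)
    {F G : X → ℝ≥0∞} (hFC : ∀ x, F x ≤ C) (hGC : ∀ x, G x ≤ C) :
    penalizedEnergy μ K ε F G ≠ ∞ := by
  have henergy : energy μ K F G ≤ C * (D * C * μ univ) * μ univ :=
    lintegral_le_of_le fun x => mul_le_mul' (hFC x) (hK.potential_le hGC x)
  have hmass : ∫⁻ x, F x ∂μ ≤ C * μ univ := lintegral_le_of_le hFC
  have := ne_top_of_le_ne_top (by finiteness) henergy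
  have := ne_top_of_le_ne_top (by finiteness) hmass
  unfold penalizedEnergy
  finiteness

/-- A kernel whose equilibrium potential is the constant `T`, and for which almost every point is
related to the base point `o` by approximate isometries. -/
structure IsApproxHomogeneous (μ : Measure X) (K : X → X → ℝ≥0) (d l : ℝ) (o : X) (T : ℝ≥0∞) :
    Prop where
  potential_one : ∀ x, potential μ K 1 x = T
  approx_base : ∀ᵐ x ∂μ, ApproxReflected μ K d l x o
  base_approx : ∀ᵐ x ∂μ, ApproxReflected μ K d l o x

variable {o : X} {T : ℝ≥0∞}

lemma lintegral_potential_eq [SFinite μ] (hK : IsBoundedSymmKernel K D)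
    (hT : ∀ x, potential μ K 1 x = T) {F : X → ℝ≥0∞} (hF : Measurable F) :
    ∫⁻ x, potential μ K F x ∂μ = T * ∫⁻ x, F x ∂μ := by
  have hcomm := energy_comm (μ := μ) hK.measurable
    (Eventually.of_forall fun z => hK.symm z.1 z.2) hF
    (measurable_one : Measurable (1 : X → ℝ≥0∞))
  simp only [energy, hT, Pi.one_apply, one_mul] at hcomm
  rw [← hcomm, lintegral_mul_const _ hF, mul_comm]

lemma lintegral_mul_potential_le [SFinite μ] (hK : IsBoundedSymmKernel K D)
    {F G : X → ℝ≥0∞} (hF : Measurable F) (hG : Measurable G) (hGC : ∀ x, G x ≤ C) (o : X) :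
    (∫⁻ x, G x ∂μ) * potential μ K F o ≤
      energy μ K F G + C * ∫⁻ x, (potential μ K F o - potential μ K F x) ∂μ := by
  rw [energy_comm hK.measurable (Eventually.of_forall fun z => hK.symm z.1 z.2) hF hG, energy,
    ← lintegral_mul_const _ hG, ← lintegral_const_mul' _ _ coe_ne_top,
    ← lintegral_add_left (hG.fun_mul (measurable_potential hK.measurable hF))]
  refine lintegral_mono fun x => ?_
  calc G x * potential μ K F o
      ≤ G x * (potential μ K F x + (potential μ K F o - potential μ K F x)) := by
        gcongr; exact le_add_tsub
    _ = G x * potential μ K F x + G x * (potential μ K F o - potential μ K F x) := mul_add _ _ _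
    _ ≤ _ := by gcongr; exact hGC x

lemma mul_lintegral_mul_lintegral_le [SFinite μ] (hK : IsBoundedSymmKernel K D)
    (hT : ∀ x, potential μ K 1 x = T) {F G : X → ℝ≥0∞} (hF : Measurable F) (hG : Measurable G)
    (hGC : ∀ x, G x ≤ C) (o : X) :
    T * ((∫⁻ x, F x ∂μ) * ∫⁻ x, G x ∂μ) ≤
      μ univ * (energy μ K F G + C * ∫⁻ x, (potential μ K F o - potential μ K F x) ∂μ) +
        (∫⁻ x, (potential μ K F x - potential μ K F o) ∂μ) * (C * μ univ) := by
  have hmass : T * ∫⁻ x, F x ∂μ ≤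
      potential μ K F o * μ univ + ∫⁻ x, (potential μ K F x - potential μ K F o) ∂μ := by
    rw [← lintegral_potential_eq hK hT hF, ← lintegral_const, ← lintegral_add_left measurable_const]
    exact lintegral_mono fun x => le_add_tsub
  calc T * ((∫⁻ x, F x ∂μ) * ∫⁻ x, G x ∂μ) = T * (∫⁻ x, F x ∂μ) * ∫⁻ x, G x ∂μ := by ring
    _ ≤ (potential μ K F o * μ univ + ∫⁻ x, (potential μ K F x - potential μ K F o) ∂μ) *
          ∫⁻ x, G x ∂μ := by gcongr
    _ = μ univ * ((∫⁻ x, G x ∂μ) * potential μ K F o) +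
          (∫⁻ x, (potential μ K F x - potential μ K F o) ∂μ) * ∫⁻ x, G x ∂μ := by ring
    _ ≤ _ := add_le_add (mul_le_mul_right (lintegral_mul_potential_le hK hF hG hGC o) _)
        (mul_le_mul_right (lintegral_le_of_le hGC) _)

lemma rpow_lintegral_rpow_le_lintegral_mul (hp : 0 < p) (hp1 : p ≤ 1) {F : X → ℝ≥0∞}
    (hF : Measurable F) :
    (∫⁻ x, F x ^ p ∂μ) ^ (1 / p) ≤ (∫⁻ x, F x ∂μ) * μ univ ^ (1 / p - 1) := by
  simpa [eLpNorm'] using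
    eLpNorm'_le_eLpNorm'_mul_rpow_measure_univ hp hp1 (hF.aestronglyMeasurable (μ := μ))

lemma tendsto_lintegral_potential_sub [IsFiniteMeasure μ] (hK : IsBoundedSymmKernel K D)
    (hdl : 0 ≤ d + l) (hl : 0 < l) (hp : 0 ≤ p) (hpd : (d + l) * p = d) (hε : ε ≠ 0) (hε' : ε ≠ ∞)
    {F G : ℕ → X → ℝ≥0∞} {m : ℝ≥0∞} (hmin : IsMinimizingSeq μ K p C ε A B F G m) {u v : X → X}
    (hu : Measurable u) (hv : Measurable v)
    (huv : ∀ᵐ x ∂μ, ApproxReflected μ K d l (v x) (u x)) :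
    Tendsto (fun k => ∫⁻ x, (potential μ K (F k) (u x) - potential μ K (F k) (v x)) ∂μ)
      atTop (𝓝 0) := by
  rw [← lintegral_zero (μ := μ)]
  refine tendsto_lintegral_of_dominated_convergence (fun _ => D * C * μ univ) (fun k => ?_)
    (fun k => Eventually.of_forall fun x => tsub_le_self.trans
      (hK.potential_le (hmin.left_mem k).2.1 (u x))) ?_ ?_
  · have hpot := measurable_potential (μ := μ) hK.measurable (hmin.left_mem k).1
    exact (hpot.comp hu).sub (hpot.comp hv)
  · rw [lintegral_const]
    finiteness
  · filter_upwards [huv] with x hx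
    exact tendsto_potential_sub_potential hK hdl hl hp hpd hε hε' hmin hx

lemma rpow_sub_one_sq_mul_self {a : ℝ≥0∞} (hp : 0 < p) (hp1 : p ≤ 1) :
    (a ^ (1 / p - 1)) ^ 2 * a = a ^ (2 / p - 1) := by
  have hsub : 0 ≤ 1 / p - 1 := sub_nonneg.2 ((one_le_div hp).2 hp1)
  rw [← ENNReal.rpow_natCast, ← ENNReal.rpow_mul]
  nth_rewrite 2 [← ENNReal.rpow_one a]
  rw [← ENNReal.rpow_add_of_nonneg _ _ (by positivity) zero_le_one]
  congr 1
  push_cast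
  ring

lemma pos_of_exponents (hd : 0 < d) (hl : 0 < l) (hpd : (d + l) * p = d) : 0 < p :=
  (mul_pos_iff_of_pos_left (add_pos hd hl)).1 (hpd.symm ▸ hd)

lemma mul_rpow_lintegral_mul_le_energy_add_potential_sub [SFinite μ] (hK : IsBoundedSymmKernel K D)
    (hT : ∀ x, potential μ K 1 x = T) (hp : 0 < p) (hp1 : p ≤ 1) {F G : X → ℝ≥0∞}
    (hF : Measurable F) (hG : Measurable G) (hGC : ∀ x, G x ≤ C) (o : X) :
    T * ((∫⁻ x, F x ^ p ∂μ) ^ (1 / p) * (∫⁻ x, G x ^ p ∂μ) ^ (1 / p)) ≤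
      (μ univ ^ (1 / p - 1)) ^ 2 *
        (μ univ * (energy μ K F G + C * ∫⁻ x, (potential μ K F o - potential μ K F x) ∂μ) +
          (∫⁻ x, (potential μ K F x - potential μ K F o) ∂μ) * (C * μ univ)) := by
  calc T * ((∫⁻ x, F x ^ p ∂μ) ^ (1 / p) * (∫⁻ x, G x ^ p ∂μ) ^ (1 / p))
      ≤ T * ((∫⁻ x, F x ∂μ) * μ univ ^ (1 / p - 1) *
          ((∫⁻ x, G x ∂μ) * μ univ ^ (1 / p - 1))) := by
        gcongr <;> exact rpow_lintegral_rpow_le_lintegral_mul hp hp1 ‹_›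
    _ = (μ univ ^ (1 / p - 1)) ^ 2 * (T * ((∫⁻ x, F x ∂μ) * ∫⁻ x, G x ∂μ)) := by ring
    _ ≤ _ := by gcongr; exact mul_lintegral_mul_lintegral_le hK hT hF hG hGC o

theorem mul_rpow_lintegral_mul_le_penalizedEnergy [IsFiniteMeasure μ]
    (hK : IsBoundedSymmKernel K D) (hhom : IsApproxHomogeneous μ K d l o T) (hd : 0 < d)
    (hl : 0 < l) (hpd : (d + l) * p = d) (hε : ε ≠ 0) (hε' : ε ≠ ∞) {F₀ G₀ : X → ℝ≥0∞}
    (hF₀ : F₀ ∈ admissible μ p C A) (hG₀ : G₀ ∈ admissible μ p C B) :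
    T * (A ^ (1 / p) * B ^ (1 / p)) ≤ μ univ ^ (2 / p - 1) * penalizedEnergy μ K ε F₀ G₀ := by
  have hp : 0 < p := pos_of_exponents hd hl hpd
  have hp1 : p ≤ 1 := by nlinarith
  have hdl : 0 ≤ d + l := by positivity
  have hvol : μ univ ≠ ∞ := measure_ne_top μ univ
  have hM : μ univ ^ (1 / p - 1) ≠ ∞ :=
    ENNReal.rpow_ne_top_of_nonneg (sub_nonneg.2 ((one_le_div hp).2 hp1)) hvol
  obtain ⟨F, G, m, hmin, hm⟩ :=
    exists_isMinimizingSeq hF₀ hG₀ (penalizedEnergy_ne_top hK hε' hF₀.2.1 hG₀.2.1)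
  have hfrom := tendsto_lintegral_potential_sub hK hdl hl hp.le hpd hε hε' hmin
    (u := fun _ => o) (v := fun x => x) measurable_const measurable_id hhom.approx_base
  have hto := tendsto_lintegral_potential_sub hK hdl hl hp.le hpd hε hε' hmin
    (u := fun x => x) (v := fun _ => o) measurable_id measurable_const hhom.base_approx
  have hlim : Tendsto (fun k => (μ univ ^ (1 / p - 1)) ^ 2 *
      (μ univ * (penalizedEnergy μ K ε (F k) (G k) +
          C * ∫⁻ x, (potential μ K (F k) o - potential μ K (F k) x) ∂μ) +
        (∫⁻ x, (potential μ K (F k) x - potential μ K (F k) o) ∂μ) * (C * μ univ))) atTop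
      (𝓝 ((μ univ ^ (1 / p - 1)) ^ 2 * (μ univ * (m + C * 0) + 0 * (C * μ univ)))) := by
    refine ENNReal.Tendsto.const_mul (Tendsto.add ?_ ?_) (Or.inr (by finiteness))
    · exact ENNReal.Tendsto.const_mul (hmin.tendsto.add
        (ENNReal.Tendsto.const_mul hfrom (Or.inr coe_ne_top))) (Or.inr hvol)
    · exact ENNReal.Tendsto.mul_const hto (Or.inr (by finiteness))
  rw [mul_zero, zero_mul, add_zero, add_zero, ← mul_assoc, rpow_sub_one_sq_mul_self hp hp1]
    at hlim
  refine (ge_of_tendsto' hlim fun k => ?_).trans (by gcongr)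
  obtain ⟨hF, -, hFA⟩ := hmin.left_mem k
  obtain ⟨hG, hGC, hGB⟩ := hmin.right_mem k
  rw [← hFA, ← hGB]
  refine (mul_rpow_lintegral_mul_le_energy_add_potential_sub hK hhom.potential_one hp hp1 hF hG hGC
    o).trans ?_
  gcongr
  exact le_self_add

theorem mul_rpow_lintegral_mul_le_energy_of_le [IsFiniteMeasure μ]
    (hK : IsBoundedSymmKernel K D) (hhom : IsApproxHomogeneous μ K d l o T) (hd : 0 < d)
    (hl : 0 < l) (hpd : (d + l) * p = d) {F G : X → ℝ≥0∞} (hF : Measurable F) (hG : Measurable G)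
    (hFC : ∀ x, F x ≤ C) (hGC : ∀ x, G x ≤ C) :
    T * ((∫⁻ x, F x ^ p ∂μ) ^ (1 / p) * (∫⁻ x, G x ^ p ∂μ) ^ (1 / p)) ≤
      μ univ ^ (2 / p - 1) * energy μ K F G := by
  have hp : 0 < p := pos_of_exponents hd hl hpd
  have hp1 : p ≤ 1 := by nlinarith
  have hM : μ univ ^ (2 / p - 1) ≠ ∞ := ENNReal.rpow_ne_top_of_nonneg
    (sub_nonneg.2 ((one_le_div hp).2 (by linarith))) (measure_ne_top μ univ)
  have hmass : ∫⁻ x, F x ∂μ ≠ ∞ :=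
    ne_top_of_le_ne_top (by finiteness) (lintegral_le_of_le hFC)
  have hlim : Tendsto (fun ε => μ univ ^ (2 / p - 1) * penalizedEnergy μ K ε F G) (𝓝[>] 0)
      (𝓝 (μ univ ^ (2 / p - 1) * (energy μ K F G + 0 * ∫⁻ x, F x ∂μ))) :=
    (ENNReal.Tendsto.const_mul (tendsto_const_nhds.add (ENNReal.Tendsto.mul_const tendsto_id
      (Or.inr hmass))) (Or.inr hM)).mono_left nhdsWithin_le_nhds
  rw [zero_mul, add_zero] at hlim
  refine ge_of_tendsto hlim ?_
  filter_upwards [eventually_mem_nhdsWithin, nhdsWithin_le_nhds (Iio_mem_nhds zero_lt_top)]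
    with ε hε hε'
  exact mul_rpow_lintegral_mul_le_penalizedEnergy hK hhom hd hl hpd (ne_of_gt hε) (ne_of_lt hε')
    ⟨hF, hFC, rfl⟩ ⟨hG, hGC, rfl⟩

lemma iSup_rpow_lintegral_min_natCast (hp : 0 < p) {F : X → ℝ≥0∞} (hF : Measurable F) :
    ⨆ k : ℕ, (∫⁻ x, min (F x) k ^ p ∂μ) ^ (1 / p) = (∫⁻ x, F x ^ p ∂μ) ^ (1 / p) := by
  have hmono (x : X) : Monotone fun k : ℕ => min (F x) k ^ p := fun i j hij => by
    dsimp only; gcongr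
  refine iSup_eq_of_tendsto (fun i j hij => ?_) ((ENNReal.continuous_rpow_const.tendsto _).comp
    (lintegral_tendsto_of_tendsto_of_monotone
      (fun k => ((hF.min measurable_const).pow_const p).aemeasurable)
      (Eventually.of_forall hmono) (Eventually.of_forall fun x => ?_)))
  · exact ENNReal.rpow_le_rpow (lintegral_mono fun x => hmono x hij) (by positivity)
  · have hmin := (tendsto_const_nhds (x := F x)).min ENNReal.tendsto_nat_nhds_top
    rw [min_top_right] at hmin
    exact (ENNReal.continuous_rpow_const.tendsto _).comp hmin

theorem mul_rpow_lintegral_mul_le_energy [IsFiniteMeasure μ]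
    (hK : IsBoundedSymmKernel K D) (hhom : IsApproxHomogeneous μ K d l o T) (hd : 0 < d)
    (hl : 0 < l) (hpd : (d + l) * p = d) {F G : X → ℝ≥0∞} (hF : Measurable F)
    (hG : Measurable G) :
    T * ((∫⁻ x, F x ^ p ∂μ) ^ (1 / p) * (∫⁻ x, G x ^ p ∂μ) ^ (1 / p)) ≤
      μ univ ^ (2 / p - 1) * energy μ K F G := by
  have hp : 0 < p := pos_of_exponents hd hl hpd
  rw [← iSup_rpow_lintegral_min_natCast hp hF, ← iSup_rpow_lintegral_min_natCast hp hG]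
  simp only [ENNReal.iSup_mul, ENNReal.mul_iSup]
  refine iSup_le fun j => iSup_le fun k => ?_
  refine (mul_rpow_lintegral_mul_le_energy_of_le (C := (max j k : ℕ)) hK hhom hd hl hpd
    (hF.min measurable_const) (hG.min measurable_const) (fun x => ?_) fun x => ?_).trans ?_
  · exact (min_le_right _ _).trans (by simp)
  · exact (min_le_right _ _).trans (by simp)
  · gcongr
    exact energy_mono (fun x => min_le_left _ _) fun x => min_le_left _ _

lemma ConformalReflection.outerKernel_of_one_lt (R : ConformalReflection μ K d l) (x : X) {y : X}
    (hy : 1 < R.factor y) : R.outerKernel x y = R.reflectedKernel x y :=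
  indicator_of_mem (s := {y | 1 < R.factor y}) hy _

lemma tendsto_sub_outerKernel {R S : ℕ → ConformalReflection μ K d l} {x x' y : X}
    (hR : Tendsto (fun j => (R j).reflectedKernel x y) atTop (𝓝 (K x' y)))
    (hS : Tendsto (fun j => (S j).reflectedKernel x y) atTop (𝓝 (K x' y)))
    (hside : (∀ᶠ j in atTop, 1 < (R j).factor y) ∨ ∀ᶠ j in atTop, 1 < (S j).factor y) :
    Tendsto (fun j => (K x' y - ((R j).outerKernel x y + (S j).outerKernel x y) : ℝ≥0∞)) atTop
      (𝓝 0) := by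
  have hsub {Q : ℕ → ConformalReflection μ K d l}
      (hQ : Tendsto (fun j => (Q j).reflectedKernel x y) atTop (𝓝 (K x' y))) :
      Tendsto (fun j => (K x' y - (Q j).reflectedKernel x y : ℝ≥0∞)) atTop (𝓝 0) := by
    simpa using ENNReal.Tendsto.sub (tendsto_const_nhds (x := (K x' y : ℝ≥0∞)))
      (ENNReal.tendsto_coe.2 hQ) (Or.inl coe_ne_top)
  rcases hside with hside | hside
  · refine tendsto_of_tendsto_of_tendsto_of_le_of_le' tendsto_const_nhds (hsub hR)
      (Eventually.of_forall fun _ => zero_le) ?_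
    filter_upwards [hside] with j hj
    rw [(R j).outerKernel_of_one_lt x hj]
    exact tsub_le_tsub_left le_self_add _
  · refine tendsto_of_tendsto_of_tendsto_of_le_of_le' tendsto_const_nhds (hsub hS)
      (Eventually.of_forall fun _ => zero_le) ?_
    filter_upwards [hside] with j hj
    rw [(S j).outerKernel_of_one_lt x hj]
    exact tsub_le_tsub_left le_add_self _

lemma tendsto_measure_factor_lt_one_inter [IsFiniteMeasure μ]
    {R S : ℕ → ConformalReflection μ K d l}
    (hside : ∀ᵐ y ∂μ,
      (∀ᶠ j in atTop, 1 < (R j).factor y) ∨ ∀ᶠ j in atTop, 1 < (S j).factor y) :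
    Tendsto (fun j => μ ({y | (R j).factor y < 1} ∩ {y | (S j).factor y < 1})) atTop (𝓝 0) := by
  rw [← measure_empty (μ := μ)]
  refine tendsto_measure_of_ae_tendsto_indicator_of_isFiniteMeasure atTop MeasurableSet.empty
    (fun j => (R j).measurableSet_factor_lt_one.inter (S j).measurableSet_factor_lt_one) ?_
  filter_upwards [hside] with y hy
  rcases hy with hy | hy <;> filter_upwards [hy] with j hj
  · exact iff_of_false (fun h => h.1.not_gt hj) (notMem_empty y)
  · exact iff_of_false (fun h => h.2.not_gt hj) (notMem_empty y)

lemma approxReflected_of_tendsto [IsFiniteMeasure μ] (hK : IsBoundedSymmKernel K D)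
    {R S : ℕ → ConformalReflection μ K d l} {x x' : X}
    (hR : ∀ᵐ y ∂μ, Tendsto (fun j => (R j).reflectedKernel x y) atTop (𝓝 (K x' y)))
    (hS : ∀ᵐ y ∂μ, Tendsto (fun j => (S j).reflectedKernel x y) atTop (𝓝 (K x' y)))
    (hside : ∀ᵐ y ∂μ,
      (∀ᶠ j in atTop, 1 < (R j).factor y) ∨ ∀ᶠ j in atTop, 1 < (S j).factor y) :
    ApproxReflected μ K d l x x' := by
  intro η hη
  have hcover : Tendsto
      (fun j => ∫⁻ y, (K x' y - ((R j).outerKernel x y + (S j).outerKernel x y) : ℝ≥0∞) ∂μ)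
      atTop (𝓝 0) := by
    rw [← lintegral_zero (μ := μ)]
    refine tendsto_lintegral_of_dominated_convergence (fun _ => D) (fun j => ?_)
      (fun j => Eventually.of_forall fun y => tsub_le_self.trans (coe_le_coe.2 (hK.le x' y))) ?_ ?_
    · exact (hK.measurable.of_uncurry_left.coe_nnreal_ennreal).sub
        (((R j).measurable_outerKernel hK.measurable x).coe_nnreal_ennreal.add
          ((S j).measurable_outerKernel hK.measurable x).coe_nnreal_ennreal)
    · rw [lintegral_const]
      finiteness
    · filter_upwards [hR, hS, hside] with y hRy hSy hy
      exact tendsto_sub_outerKernel hRy hSy hy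
  obtain ⟨j, hj⟩ := ((ENNReal.tendsto_nhds_zero.1 hcover η (pos_iff_ne_zero.2 hη)).and
    (ENNReal.tendsto_nhds_zero.1 (tendsto_measure_factor_lt_one_inter hside) η
      (pos_iff_ne_zero.2 hη))).exists
  exact ⟨R j, S j, hj⟩

end Minimization

section Sphere

variable {E : Type*} [NormedAddCommGroup E]

/-- The conformal factor `2 / (1 + |x|²)` of stereographic projection, i.e. the ratio of spherical
to Euclidean length elements. -/
noncomputable def sphereFactor (x : E) : ℝ≥0 := 2 / (1 + ‖x‖₊ ^ 2)

/-- The power `2 * l` of the chordal distance of the sphere, in stereographic coordinates. -/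
noncomputable def chordalKernel (l : ℝ) (x y : E) : ℝ≥0 :=
  (sphereFactor x * sphereFactor y * nndist x y ^ 2) ^ l

lemma sphereFactor_pos (x : E) : 0 < sphereFactor x := by
  unfold sphereFactor
  positivity

lemma coe_sphereFactor (x : E) : (sphereFactor x : ℝ) = 2 / (1 + ‖x‖ ^ 2) := by
  simp [sphereFactor]

lemma continuous_sphereFactor : Continuous (sphereFactor : E → ℝ≥0) :=
  continuous_const.div (by fun_prop) fun _ => by positivity

lemma measurable_sphereFactor [MeasurableSpace E] [BorelSpace E] :
    Measurable (sphereFactor : E → ℝ≥0) :=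
  continuous_sphereFactor.measurable

lemma chordalKernel_comm (l : ℝ) (x y : E) : chordalKernel l x y = chordalKernel l y x := by
  rw [chordalKernel, chordalKernel, nndist_comm, mul_comm (sphereFactor x)]

lemma chordalKernel_le {l : ℝ} (hl : 0 ≤ l) (x y : E) : chordalKernel l x y ≤ 4 ^ l := by
  refine NNReal.rpow_le_rpow ?_ hl
  rw [← NNReal.coe_le_coe]
  push_cast
  rw [coe_sphereFactor, coe_sphereFactor, dist_eq_norm, div_mul_div_comm, div_mul_eq_mul_div,
    div_le_iff₀ (by positivity)]
  have htri : ‖x - y‖ ^ 2 ≤ (‖x‖ + ‖y‖) ^ 2 := by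
    gcongr
    exact norm_sub_le x y
  nlinarith [sq_nonneg (1 - ‖x‖ * ‖y‖)]

lemma dist_sq_mul_one_add_norm_sq_pos {a x : E} (hx : x ≠ a) (y : E) :
    0 < dist x a ^ 2 * (1 + ‖y‖ ^ 2) := by
  have := dist_pos.2 hx
  positivity

lemma radius_pos {a : E} {r : ℝ≥0} (hr : (r : ℝ) ^ 2 = 1 + ‖a‖ ^ 2) : 0 < r :=
  pos_of_ne_zero fun h => by
    rw [h, NNReal.coe_zero, zero_pow two_ne_zero] at hr
    linarith [sq_nonneg ‖a‖]

end Sphere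

section Inversion

open EuclideanGeometry Module Submodule

variable {E : Type*} [NormedAddCommGroup E] [InnerProductSpace ℝ E]

/-- The conformal factor, with respect to the metric of the sphere, of the inversion in the sphere
of center `a` and radius `r`. -/
noncomputable def inversionFactor (a : E) (r : ℝ≥0) (x : E) : ℝ≥0 :=
  (r / nndist x a) ^ 2 * sphereFactor (inversion a r x) / sphereFactor x

lemma inversion_eq_smul_add (a : E) (r : ℝ) (x : E) :
    inversion a r x = (r / dist x a) ^ 2 • (x - a) + a := by
  simp only [inversion, vsub_eq_sub, vadd_eq_add]

lemma one_add_norm_inversion_sq (a : E) (r : ℝ) {x : E} (hx : x ≠ a) :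
    1 + ‖inversion a r x‖ ^ 2 = (r / dist x a) ^ 2 * (1 + ‖x‖ ^ 2) +
      (1 + ‖a‖ ^ 2 - r ^ 2) * (1 - (r / dist x a) ^ 2) := by
  have hdist : dist x a ≠ 0 := dist_ne_zero.2 hx
  have hnorm : ‖x‖ ^ 2 = ‖x - a‖ ^ 2 + 2 * inner ℝ (x - a) a + ‖a‖ ^ 2 := by
    rw [← norm_add_sq_real, sub_add_cancel]
  have hscale : (r / dist x a) ^ 2 * ‖x - a‖ ^ 2 = r ^ 2 := by
    rw [← dist_eq_norm]
    field_simp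
  rw [inversion_eq_smul_add, norm_add_sq_real, norm_smul, inner_smul_left, mul_pow, hnorm]
  simp only [Real.norm_eq_abs, sq_abs, conj_trivial]
  linear_combination ((r / dist x a) ^ 2 - 1) * hscale

lemma dist_inversion_sq (a : E) {r : ℝ} (hr : r ≠ 0) {x y : E} (hy : y ≠ a) :
    dist x (inversion a r y) ^ 2 = (r / dist y a) ^ 2 *
      (dist x y ^ 2 + (dist x a ^ 2 - r ^ 2) * (dist y a ^ 2 - r ^ 2) / r ^ 2) := by
  have hdist : dist y a ≠ 0 := dist_ne_zero.2 hy
  have hinv : dist x (inversion a r y) ^ 2 = dist x a ^ 2 -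
      2 * ((r / dist y a) ^ 2 * inner ℝ (x - a) (y - a)) +
        ((r / dist y a) ^ 2) ^ 2 * dist y a ^ 2 := by
    rw [dist_eq_norm x (inversion a r y), inversion_eq_smul_add, ← sub_sub_sub_cancel_right _ _ a,
      add_sub_cancel_right, norm_sub_sq_real, norm_smul, inner_smul_right, mul_pow, ← dist_eq_norm,
      ← dist_eq_norm, Real.norm_eq_abs, sq_abs]
  have hxy : dist x y ^ 2 = dist x a ^ 2 - 2 * inner ℝ (x - a) (y - a) + dist y a ^ 2 := by
    rw [dist_eq_norm x y, ← sub_sub_sub_cancel_right x y a, norm_sub_sq_real, ← dist_eq_norm,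
      ← dist_eq_norm]
  rw [hinv, hxy]
  field_simp
  ring

lemma coe_inversionFactor (a : E) (r : ℝ≥0) (x : E) : (inversionFactor a r x : ℝ) =
    ((r : ℝ) / dist x a) ^ 2 * (1 + ‖x‖ ^ 2) / (1 + ‖inversion a r x‖ ^ 2) := by
  simp only [inversionFactor, NNReal.coe_div, NNReal.coe_mul, NNReal.coe_pow, coe_nndist,
    coe_sphereFactor]
  field_simp

-- `1 + ‖a‖² = r²` characterizes the inversions that are isometries of the sphere.
lemma one_sub_inversionFactor_mul (a : E) (r : ℝ≥0) {x : E} (hx : x ≠ a) :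
    (1 - (inversionFactor a r x : ℝ)) * (dist x a ^ 2 * (1 + ‖inversion a r x‖ ^ 2)) =
      (1 + ‖a‖ ^ 2 - r ^ 2) * (dist x a ^ 2 - r ^ 2) := by
  have hdist : dist x a ≠ 0 := dist_ne_zero.2 hx
  have hne : 1 + ‖inversion a r x‖ ^ 2 ≠ 0 := by positivity
  have hscale : ((r : ℝ) / dist x a) ^ 2 * dist x a ^ 2 = (r : ℝ) ^ 2 := by field_simp
  have hnorm := one_add_norm_inversion_sq a r hx
  calc (1 - (inversionFactor a r x : ℝ)) * (dist x a ^ 2 * (1 + ‖inversion a r x‖ ^ 2))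
      = dist x a ^ 2 * (1 + ‖inversion a r x‖ ^ 2) -
          ((r : ℝ) / dist x a) ^ 2 * dist x a ^ 2 * (1 + ‖x‖ ^ 2) := by
        rw [coe_inversionFactor]
        field_simp
    _ = _ := by linear_combination dist x a ^ 2 * hnorm - (1 + ‖a‖ ^ 2 - r ^ 2) * hscale

lemma one_lt_inversionFactor (a : E) (r : ℝ≥0) {x : E} (hx : x ≠ a)
    (h : (1 + ‖a‖ ^ 2 - (r : ℝ) ^ 2) * (dist x a ^ 2 - r ^ 2) < 0) : 1 < inversionFactor a r x := by
  rw [← one_sub_inversionFactor_mul a r hx] at h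
  rw [← NNReal.coe_lt_coe, NNReal.coe_one, ← sub_neg]
  exact neg_of_mul_neg_left h (dist_sq_mul_one_add_norm_sq_pos hx _).le

lemma inversionFactor_eq_one_iff (a : E) (r : ℝ≥0) {x : E} (hx : x ≠ a) :
    inversionFactor a r x = 1 ↔ (r : ℝ) ^ 2 = 1 + ‖a‖ ^ 2 ∨ dist x a = r := by
  rw [← NNReal.coe_inj, NNReal.coe_one, eq_comm, ← sub_eq_zero,
    ← mul_eq_zero_iff_right (dist_sq_mul_one_add_norm_sq_pos hx (inversion a r x)).ne',
    one_sub_inversionFactor_mul a r hx, mul_eq_zero, sub_eq_zero, sub_eq_zero,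
    eq_comm (a := 1 + ‖a‖ ^ 2),
    pow_left_inj₀ dist_nonneg r.coe_nonneg two_ne_zero]

lemma inversionFactor_pos (a : E) {r : ℝ≥0} (hr : 0 < r) {x : E} (hx : x ≠ a) :
    0 < inversionFactor a r x := by
  have hdist : 0 < nndist x a := dist_pos.2 hx
  exact div_pos (mul_pos (by positivity) (sphereFactor_pos _)) (sphereFactor_pos _)

lemma inversionFactor_inversion (a : E) {r : ℝ≥0} (hr : 0 < r) {x : E} (hx : x ≠ a) :
    inversionFactor a r (inversion a r x) = (inversionFactor a r x)⁻¹ := by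
  have hr' : (r : ℝ) ≠ 0 := NNReal.coe_ne_zero.2 hr.ne'
  have hdist : dist x a ≠ 0 := dist_ne_zero.2 hx
  rw [← NNReal.coe_inj, NNReal.coe_inv, coe_inversionFactor, coe_inversionFactor,
    inversion_inversion a hr', dist_inversion_center]
  field_simp

lemma chordalKernel_inversion_inversion (a : E) (r : ℝ≥0) (l : ℝ) {x y : E} (hx : x ≠ a)
    (hy : y ≠ a) : chordalKernel l (inversion a r x) (inversion a r y) =
      inversionFactor a r x ^ l * inversionFactor a r y ^ l * chordalKernel l x y := by
  have hdist : nndist (inversion a r x) (inversion a r y) =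
      r ^ 2 / (nndist x a * nndist y a) * nndist x y :=
    NNReal.eq (dist_inversion_inversion hx hy r)
  have hx' : nndist x a ≠ 0 := nndist_eq_zero.not.2 hx
  have hy' : nndist y a ≠ 0 := nndist_eq_zero.not.2 hy
  have hwx := (sphereFactor_pos x).ne'
  have hwy := (sphereFactor_pos y).ne'
  unfold chordalKernel
  rw [← NNReal.mul_rpow, ← NNReal.mul_rpow, hdist]
  unfold inversionFactor
  congr 1
  field_simp

lemma chordalKernel_inversion_mul (a : E) {r : ℝ≥0} (hr : 0 < r) (l : ℝ) (x : E) {y : E}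
    (hy : y ≠ a) : chordalKernel l x (inversion a r y) * inversionFactor a r y ^ (-l) =
      (sphereFactor x * sphereFactor y *
        (nndist x (inversion a r y) ^ 2 / (r / nndist y a) ^ 2)) ^ l := by
  have hy' : nndist y a ≠ 0 := nndist_eq_zero.not.2 hy
  have hwy := (sphereFactor_pos y).ne'
  have hwi := (sphereFactor_pos (inversion a r y)).ne'
  have hr' := hr.ne'
  rw [chordalKernel, NNReal.rpow_neg, ← NNReal.inv_rpow, ← NNReal.mul_rpow]
  unfold inversionFactor
  congr 1
  field_simp

lemma chordalKernel_le_inversion (a : E) {r : ℝ≥0} (hr : 0 < r) {l : ℝ} (hl : 0 ≤ l) {x y : E}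
    (hy : y ≠ a) (h : 0 ≤ (dist x a ^ 2 - r ^ 2) * (dist y a ^ 2 - (r : ℝ) ^ 2)) :
    chordalKernel l x y ≤ chordalKernel l x (inversion a r y) * inversionFactor a r y ^ (-l) := by
  have hr' : (r : ℝ) ≠ 0 := NNReal.coe_ne_zero.2 hr.ne'
  have hdist : dist y a ≠ 0 := dist_ne_zero.2 hy
  rw [chordalKernel_inversion_mul a hr l x hy]
  refine NNReal.rpow_le_rpow ?_ hl
  gcongr
  rw [← NNReal.coe_le_coe]
  push_cast
  rw [dist_inversion_sq a hr' hy, mul_div_cancel_left₀ _ (by positivity)]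
  exact le_add_of_nonneg_right (by positivity)

lemma sub_sq_mul_sub_sq_nonneg {a : E} {r : ℝ≥0} (hne : (r : ℝ) ^ 2 ≠ 1 + ‖a‖ ^ 2) {x y : E}
    (hx : x ≠ a) (hy : y ≠ a) (h : inversionFactor a r x < 1 ↔ inversionFactor a r y < 1) :
    0 ≤ (dist x a ^ 2 - r ^ 2) * (dist y a ^ 2 - (r : ℝ) ^ 2) := by
  have hsame : 0 ≤ (1 - (inversionFactor a r x : ℝ)) * (1 - inversionFactor a r y) := by
    rw [← NNReal.coe_lt_coe, ← NNReal.coe_lt_coe, NNReal.coe_one] at h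
    by_cases hlt : (inversionFactor a r x : ℝ) < 1
    · exact mul_nonneg (sub_nonneg.2 hlt.le) (sub_nonneg.2 (h.1 hlt).le)
    · exact mul_nonneg_of_nonpos_of_nonpos (sub_nonpos.2 (not_lt.1 hlt))
        (sub_nonpos.2 (not_lt.1 (h.not.1 hlt)))
  have hsq : 0 < (1 + ‖a‖ ^ 2 - (r : ℝ) ^ 2) ^ 2 := sq_pos_of_ne_zero (sub_ne_zero.2 hne.symm)
  refine nonneg_of_mul_nonneg_right ?_ hsq
  have hx' := one_sub_inversionFactor_mul a r hx
  have hy' := one_sub_inversionFactor_mul a r hy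
  calc (0 : ℝ) ≤ (1 - (inversionFactor a r x : ℝ)) * (1 - inversionFactor a r y) *
        ((dist x a ^ 2 * (1 + ‖inversion a r x‖ ^ 2)) *
          (dist y a ^ 2 * (1 + ‖inversion a r y‖ ^ 2))) := mul_nonneg hsame (by positivity)
    _ = _ := by rw [mul_mul_mul_comm, hx', hy']; ring

lemma abs_det_fderiv_inversion [FiniteDimensional ℝ E] (a : E) (r : ℝ) (x : E) :
    |((r / dist x a) ^ 2 • ((ℝ ∙ (x - a))ᗮ.reflection : E →L[ℝ] E)).det| =
      ((r / dist x a) ^ 2) ^ finrank ℝ E := by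
  have hdet : ((r / dist x a) ^ 2 • ((ℝ ∙ (x - a))ᗮ.reflection : E →L[ℝ] E)).det =
      ((r / dist x a) ^ 2) ^ finrank ℝ E *
        LinearMap.det ((ℝ ∙ (x - a))ᗮ.reflection.toLinearMap) := by
    rw [ContinuousLinearMap.det, ContinuousLinearMap.toLinearMap_smul, LinearMap.det_smul]
    rfl
  rw [hdet, Submodule.det_reflection, abs_mul, abs_neg_one_pow, mul_one,
    abs_of_nonneg (by positivity)]

variable [MeasurableSpace E] [BorelSpace E]

lemma measurable_inversion [SecondCountableTopology E] (a : E) (r : ℝ) :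
    Measurable (inversion a r) := by
  simp only [funext (inversion_eq_smul_add a r)]
  fun_prop

variable [FiniteDimensional ℝ E]

/-- The surface measure of the sphere of dimension `finrank ℝ E`, in stereographic coordinates. -/
noncomputable def sphereMeasure (E : Type*) [NormedAddCommGroup E] [InnerProductSpace ℝ E]
    [MeasurableSpace E] [BorelSpace E] [FiniteDimensional ℝ E] : Measure E :=
  volume.withDensity fun x => ↑(sphereFactor x ^ (finrank ℝ E : ℝ))

lemma measurable_inversionFactor (a : E) (r : ℝ≥0) : Measurable (inversionFactor a r) :=
  (((measurable_const.div (by fun_prop)).pow_const 2).mul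
    (measurable_sphereFactor.comp (measurable_inversion a r))).div measurable_sphereFactor

lemma isBoundedSymmKernel_chordalKernel {l : ℝ} (hl : 0 ≤ l) :
    IsBoundedSymmKernel (chordalKernel l : E → E → ℝ≥0) (4 ^ l) where
  measurable := (((measurable_sphereFactor.comp measurable_fst).mul
    (measurable_sphereFactor.comp measurable_snd)).mul (by fun_prop)).pow_const l
  symm := chordalKernel_comm l
  le := chordalKernel_le hl

lemma lintegral_sphereMeasure (φ : E → ℝ≥0∞) :
    ∫⁻ x, φ x ∂sphereMeasure E =
      ∫⁻ x, ↑(sphereFactor x ^ (finrank ℝ E : ℝ)) * φ x :=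
  lintegral_withDensity_eq_lintegral_mul_non_measurable _
    (measurable_sphereFactor.pow_const _).coe_nnreal_ennreal
    (Eventually.of_forall fun _ => coe_lt_top) _

lemma sphereMeasure_absolutelyContinuous : sphereMeasure E ≪ volume :=
  withDensity_absolutelyContinuous _ _

instance : IsFiniteMeasure (sphereMeasure E) := by
  refine ⟨?_⟩
  rw [← setLIntegral_one, setLIntegral_univ, lintegral_sphereMeasure]
  simp only [mul_one]
  rcases Nat.eq_zero_or_pos (finrank ℝ E) with hE | hE
  · have := finrank_zero_iff.1 hE
    simp [hE]
  have hint := (integrable_rpow_neg_one_add_norm_sq (E := E) (μ := volume) (r := 2 * finrank ℝ E)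
    (by norm_cast; omega)).const_mul ((2 : ℝ) ^ (finrank ℝ E : ℝ))
  refine lt_of_le_of_lt (lintegral_mono fun x => le_of_eq ?_) hint.lintegral_lt_top
  rw [← ENNReal.ofReal_coe_nnreal, NNReal.coe_rpow, coe_sphereFactor,
    Real.div_rpow (by norm_num) (by positivity), div_eq_mul_inv, ← Real.rpow_neg (by positivity)]
  congr 3
  ring

variable [Nontrivial E]

lemma lintegral_comp_inversion (a : E) {r : ℝ≥0} (hr : 0 < r) (φ : E → ℝ≥0∞) :
    ∫⁻ x, φ x = ∫⁻ x, ↑(((r / nndist x a) ^ 2) ^ (finrank ℝ E : ℝ)) * φ (inversion a r x) := by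
  have hr' : (r : ℝ) ≠ 0 := NNReal.coe_ne_zero.2 hr.ne'
  have himage : inversion a (r : ℝ) '' {a}ᶜ = {a}ᶜ := by
    rw [image_compl_eq (inversion_bijective a hr'), image_singleton, inversion_self]
  have hchange := lintegral_image_eq_lintegral_abs_det_fderiv_mul volume
    (measurableSet_singleton a).compl
    (fun x hx => (hasFDerivAt_inversion (R := r) hx).hasFDerivWithinAt)
    (inversion_injective a hr').injOn φ
  have hae : ({a}ᶜ : Set E) =ᵐ[volume] univ := by simp [ae_eq_univ]
  rw [himage, setLIntegral_congr hae, setLIntegral_congr hae, setLIntegral_univ,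
    setLIntegral_univ] at hchange
  refine hchange.trans (lintegral_congr fun x => ?_)
  rw [abs_det_fderiv_inversion, NNReal.rpow_natCast, ← ENNReal.ofReal_coe_nnreal]
  push_cast
  rfl

lemma lintegral_sphereMeasure_comp_inversion (a : E) {r : ℝ≥0} (hr : 0 < r) (φ : E → ℝ≥0∞) :
    ∫⁻ x, φ x ∂sphereMeasure E =
      ∫⁻ x, φ (inversion a r x) * ↑(inversionFactor a r x ^ (finrank ℝ E : ℝ))
        ∂sphereMeasure E := by
  rw [lintegral_sphereMeasure, lintegral_sphereMeasure, lintegral_comp_inversion a hr]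
  refine lintegral_congr fun x => ?_
  have hfactor : (r / nndist x a) ^ 2 * sphereFactor (inversion a r x) =
      sphereFactor x * inversionFactor a r x := by
    rw [inversionFactor, mul_div_cancel₀ _ (sphereFactor_pos x).ne']
  rw [← mul_assoc, ← ENNReal.coe_mul, ← NNReal.mul_rpow, hfactor, NNReal.mul_rpow, ENNReal.coe_mul]
  ring

lemma ae_ne_and_dist_ne (a : E) (r : ℝ) :
    ∀ᵐ x ∂sphereMeasure E, x ≠ a ∧ dist x a ≠ r := by
  refine sphereMeasure_absolutelyContinuous.ae_le ?_
  filter_upwards [measure_eq_zero_iff_ae_notMem.1 (measure_singleton a),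
    measure_eq_zero_iff_ae_notMem.1 (Measure.addHaar_sphere volume a r)] with x hxa hxr
  exact ⟨hxa, hxr⟩

/-- An inversion that is not an isometry of the sphere, as a conformal reflection of the chordal
kernel. -/
noncomputable def inversionReflection (a : E) {r : ℝ≥0} (hr : 0 < r)
    (hne : (r : ℝ) ^ 2 ≠ 1 + ‖a‖ ^ 2) {l : ℝ} (hl : 0 ≤ l) :
    ConformalReflection (sphereMeasure E) (chordalKernel l) (finrank ℝ E) l where
  toFun := inversion a r
  factor := inversionFactor a r
  domain := {x | x ≠ a ∧ dist x a ≠ r}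
  measurable_toFun := measurable_inversion a r
  measurable_factor := measurable_inversionFactor a r
  lintegral_eq φ _ := lintegral_sphereMeasure_comp_inversion a hr φ
  ae_mem_domain := ae_ne_and_dist_ne a r
  mapsTo x hx := by
    have hr' : (r : ℝ) ≠ 0 := NNReal.coe_ne_zero.2 hr.ne'
    refine ⟨(inversion_eq_center hr').not.2 hx.1, fun h => hx.2 ?_⟩
    rw [dist_inversion_center, div_eq_iff (dist_ne_zero.2 hx.1), sq] at h
    exact (mul_left_cancel₀ hr' h).symm
  involutive x _ := inversion_inversion a (NNReal.coe_ne_zero.2 hr.ne') x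
  factor_pos _ hx := inversionFactor_pos a hr hx.1
  factor_toFun _ hx := inversionFactor_inversion a hr hx.1
  factor_ne_one _ hx h := ((inversionFactor_eq_one_iff a r hx.1).1 h).elim hne hx.2
  kernel_toFun _ hx _ hy := chordalKernel_inversion_inversion a r l hx.1 hy.1
  kernel_le _ hx _ hy h :=
    chordalKernel_le_inversion a hr hl hy.1 (sub_sq_mul_sub_sq_nonneg hne hx.1 hy.1 h)

end Inversion

section SphereHomogeneity

open EuclideanGeometry Module Submodule

variable {E : Type*} [NormedAddCommGroup E] [InnerProductSpace ℝ E]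

lemma exists_inversion_zero_eq {x : E} (hx : x ≠ 0) :
    ∃ (a : E) (r : ℝ≥0), (r : ℝ) ^ 2 = 1 + ‖a‖ ^ 2 ∧ a ≠ 0 ∧ inversion a r 0 = x := by
  have hx' : ‖x‖ ≠ 0 := norm_ne_zero_iff.2 hx
  have hnorm : ‖-((‖x‖ ^ 2)⁻¹ • x)‖ ^ 2 = (‖x‖ ^ 2)⁻¹ := by
    rw [norm_neg, norm_smul, mul_pow, Real.norm_eq_abs, sq_abs]
    field_simp
  have hr : (NNReal.sqrt (1 + ‖-((‖x‖ ^ 2)⁻¹ • x)‖₊ ^ 2) : ℝ) ^ 2 =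
      1 + ‖-((‖x‖ ^ 2)⁻¹ • x)‖ ^ 2 := by
    rw [← NNReal.coe_pow, NNReal.sq_sqrt]
    simp
  refine ⟨-((‖x‖ ^ 2)⁻¹ • x), NNReal.sqrt (1 + ‖-((‖x‖ ^ 2)⁻¹ • x)‖₊ ^ 2), hr, by simp [hx], ?_⟩
  rw [inversion_eq_smul_add, dist_zero_left, div_pow, hr, hnorm, zero_sub, neg_neg, smul_smul,
    ← neg_smul, ← add_smul]
  convert one_smul ℝ x using 2
  field_simp
  ring

section IsometricInversion

variable {a : E} {r : ℝ≥0}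

lemma inversionFactor_eq_one (hr : (r : ℝ) ^ 2 = 1 + ‖a‖ ^ 2) {x : E} (hx : x ≠ a) :
    inversionFactor a r x = 1 :=
  (inversionFactor_eq_one_iff a r hx).2 (Or.inl hr)

lemma chordalKernel_inversion_right (hr : (r : ℝ) ^ 2 = 1 + ‖a‖ ^ 2) (l : ℝ) {x y : E}
    (hx : x ≠ a) (hy : y ≠ a) :
    chordalKernel l x (inversion a r y) = chordalKernel l (inversion a r x) y := by
  have hr' : (r : ℝ) ≠ 0 := NNReal.coe_ne_zero.2 (radius_pos hr).ne'
  have hy' : inversion a r y ≠ a := (inversion_eq_center hr').not.2 hy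
  have hinv := chordalKernel_inversion_inversion a r l hx hy'
  rw [inversion_inversion a hr', inversionFactor_eq_one hr hx, inversionFactor_eq_one hr hy']
    at hinv
  simpa using hinv.symm

lemma tendsto_chordalKernel_inversion (hr : (r : ℝ) ^ 2 = 1 + ‖a‖ ^ 2) {l : ℝ} (hl : 0 < l)
    {x y : E} (hx : x ≠ a) (hy : y ≠ a) :
    Tendsto (fun s : ℝ≥0 => chordalKernel l x (inversion a s y) * inversionFactor a s y ^ (-l))
      (𝓝 r) (𝓝 (chordalKernel l (inversion a r x) y)) := by
  have hinv : Tendsto (fun s : ℝ≥0 => inversion a (s : ℝ) y) (𝓝 r) (𝓝 (inversion a (r : ℝ) y)) :=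
    Tendsto.inversion tendsto_const_nhds (NNReal.tendsto_coe.2 tendsto_id) tendsto_const_nhds hy
  have hsphere := (continuous_sphereFactor.tendsto _).comp hinv
  have hkernel : Tendsto (fun s : ℝ≥0 => chordalKernel l x (inversion a s y)) (𝓝 r)
      (𝓝 (chordalKernel l x (inversion a r y))) :=
    ((tendsto_const_nhds.mul hsphere).mul ((tendsto_const_nhds.nndist hinv).pow 2)).nnrpow
      tendsto_const_nhds (Or.inr hl)
  have hfactor : Tendsto (fun s : ℝ≥0 => inversionFactor a s y) (𝓝 r)
      (𝓝 (inversionFactor a r y)) :=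
    (((tendsto_id.div_const _).pow 2).mul hsphere).div_const _
  have hmul := hkernel.mul (hfactor.nnrpow (tendsto_const_nhds (x := -l))
    (Or.inl (inversionFactor_pos a (radius_pos hr) hy).ne'))
  rwa [inversionFactor_eq_one hr hy, NNReal.one_rpow, mul_one,
    chordalKernel_inversion_right hr l hx hy] at hmul

lemma one_lt_inversionFactor_of_lt (hr : (r : ℝ) ^ 2 = 1 + ‖a‖ ^ 2) {s : ℝ≥0} {y : E} (hy : y ≠ a)
    (hsr : s < r) (hys : nndist y a < s) : 1 < inversionFactor a s y := by
  refine one_lt_inversionFactor a s hy (mul_neg_of_pos_of_neg ?_ ?_)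
  · rw [← hr, sub_pos]
    exact pow_lt_pow_left₀ hsr s.coe_nonneg two_ne_zero
  · exact sub_neg.2 (pow_lt_pow_left₀ hys dist_nonneg two_ne_zero)

lemma one_lt_inversionFactor_of_gt (hr : (r : ℝ) ^ 2 = 1 + ‖a‖ ^ 2) {s : ℝ≥0} {y : E} (hy : y ≠ a)
    (hsr : r < s) (hys : s < nndist y a) : 1 < inversionFactor a s y := by
  refine one_lt_inversionFactor a s hy (mul_neg_of_neg_of_pos ?_ ?_)
  · rw [← hr, sub_neg]
    exact pow_lt_pow_left₀ hsr r.coe_nonneg two_ne_zero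
  · exact sub_pos.2 (pow_lt_pow_left₀ hys s.coe_nonneg two_ne_zero)

variable [MeasurableSpace E] [BorelSpace E] [FiniteDimensional ℝ E] [Nontrivial E]

-- The radii `u j` and `v j` increase and decrease to `r`, so that almost every `y` is eventually on
-- the outer side of one of the two inversions, according to whether it is closer to `a` than `r`.
lemma approxReflected_inversion (hr : (r : ℝ) ^ 2 = 1 + ‖a‖ ^ 2) {l : ℝ} (hl : 0 < l) {x : E}
    (hx : x ≠ a) :
    ApproxReflected (sphereMeasure E) (chordalKernel l) (finrank ℝ E) l x (inversion a r x) := by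
  obtain ⟨u, -, hu, hulim⟩ := exists_seq_strictMono_tendsto' (radius_pos hr)
  obtain ⟨v, -, hv, hvlim⟩ := exists_seq_strictAnti_tendsto r
  have hsq {s : ℝ≥0} (hs : s ≠ r) : (s : ℝ) ^ 2 ≠ 1 + ‖a‖ ^ 2 :=
    hr ▸ mod_cast (pow_left_injective two_ne_zero).ne hs
  refine approxReflected_of_tendsto (isBoundedSymmKernel_chordalKernel hl.le)
    (R := fun j => inversionReflection a (hu j).1 (hsq (hu j).2.ne) hl.le)
    (S := fun j => inversionReflection a ((radius_pos hr).trans (hv j)) (hsq (hv j).ne') hl.le)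
    ?_ ?_ ?_
  all_goals filter_upwards [ae_ne_and_dist_ne a r] with y hy
  · exact (tendsto_chordalKernel_inversion hr hl hx hy.1).comp hulim
  · exact (tendsto_chordalKernel_inversion hr hl hx hy.1).comp hvlim
  · rcases lt_or_gt_of_ne hy.2 with hlt | hgt
    · left
      filter_upwards [hulim.eventually (lt_mem_nhds (show nndist y a < r from hlt))] with j hj
      exact one_lt_inversionFactor_of_lt hr hy.1 (hu j).2 hj
    · right
      filter_upwards [hvlim.eventually (gt_mem_nhds (show r < nndist y a from hgt))] with j hj
      exact one_lt_inversionFactor_of_gt hr hy.1 (hv j) hj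

lemma potential_chordalKernel_inversion (hr : (r : ℝ) ^ 2 = 1 + ‖a‖ ^ 2) (l : ℝ) {x : E}
    (hx : x ≠ a) :
    potential (sphereMeasure E) (chordalKernel l) 1 (inversion a r x) =
      potential (sphereMeasure E) (chordalKernel l) 1 x := by
  rw [potential, lintegral_sphereMeasure_comp_inversion a (radius_pos hr)]
  refine lintegral_congr_ae ?_
  filter_upwards [ae_ne_and_dist_ne a r] with y hy
  rw [chordalKernel_inversion_inversion a r l hx hy.1, inversionFactor_eq_one hr hx,
    inversionFactor_eq_one hr hy.1]
  simp

end IsometricInversion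

variable [MeasurableSpace E] [BorelSpace E] [FiniteDimensional ℝ E] [Nontrivial E]

lemma potential_chordalKernel_one (l : ℝ) (x : E) :
    potential (sphereMeasure E) (chordalKernel l) 1 x =
      potential (sphereMeasure E) (chordalKernel l) 1 0 := by
  rcases eq_or_ne x 0 with rfl | hx
  · rfl
  obtain ⟨a, r, hr, ha, rfl⟩ := exists_inversion_zero_eq hx
  exact potential_chordalKernel_inversion hr l ha.symm

lemma approxReflected_zero {l : ℝ} (hl : 0 < l) {x : E} (hx : x ≠ 0) :
    ApproxReflected (sphereMeasure E) (chordalKernel l) (finrank ℝ E) l x 0 ∧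
      ApproxReflected (sphereMeasure E) (chordalKernel l) (finrank ℝ E) l 0 x := by
  obtain ⟨a, r, hr, ha, rfl⟩ := exists_inversion_zero_eq hx
  have hr' : (r : ℝ) ≠ 0 := NNReal.coe_ne_zero.2 (radius_pos hr).ne'
  refine ⟨?_, approxReflected_inversion hr hl ha.symm⟩
  simpa only [inversion_inversion a hr'] using
    approxReflected_inversion hr hl ((inversion_eq_center hr').not.2 ha.symm)

lemma isApproxHomogeneous_chordalKernel {l : ℝ} (hl : 0 < l) :
    IsApproxHomogeneous (sphereMeasure E) (chordalKernel l) (finrank ℝ E) l 0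
      (potential (sphereMeasure E) (chordalKernel l) 1 0) where
  potential_one := potential_chordalKernel_one l
  approx_base := (ae_ne_and_dist_ne 0 0).mono fun _ hx => (approxReflected_zero hl hx.1).1
  base_approx := (ae_ne_and_dist_ne 0 0).mono fun _ hx => (approxReflected_zero hl hx.1).2

end SphereHomogeneity

section GammaIntegrals

open Module Real

lemma lintegral_rpow_mul_exp_neg_mul_Ioi {a r : ℝ} (ha : 0 < a) (hr : 0 < r) :
    ∫⁻ t in Ioi (0 : ℝ), .ofReal (t ^ (a - 1) * exp (-(r * t))) = .ofReal (r ^ (-a) * Gamma a) := by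
  have hval := integral_rpow_mul_exp_neg_mul_Ioi ha hr
  have hpos : 0 < r ^ (-a) * Gamma a := mul_pos (rpow_pos_of_pos hr _) (Gamma_pos_of_pos ha)
  rw [one_div, inv_rpow hr.le, ← rpow_neg hr.le] at hval
  rw [← hval, ofReal_integral_eq_lintegral_ofReal (.of_integral_ne_zero (hval ▸ hpos.ne'))]
  filter_upwards [ae_restrict_mem measurableSet_Ioi] with t ht
  exact mul_nonneg (rpow_nonneg (le_of_lt ht) _) (exp_nonneg _)

variable {E : Type*} [NormedAddCommGroup E] [InnerProductSpace ℝ E] [FiniteDimensional ℝ E]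
  [Nontrivial E] [MeasurableSpace E] [BorelSpace E]

lemma finrank_mul_volume_real_unitBall :
    (finrank ℝ E : ℝ) * (volume : Measure E).real (Metric.ball 0 1) =
      2 * π ^ ((finrank ℝ E : ℝ) / 2) / Gamma ((finrank ℝ E : ℝ) / 2) := by
  have hE : (0 : ℝ) < finrank ℝ E := Nat.cast_pos.2 finrank_pos
  rw [Measure.real, InnerProductSpace.volume_ball, ofReal_one, one_pow, one_mul,
    ENNReal.toReal_ofReal (by positivity), Gamma_add_one (by positivity), sqrt_eq_rpow,
    ← Real.rpow_natCast, ← rpow_mul pi_pos.le, one_div_mul_eq_div]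
  field_simp

lemma integral_norm_rpow_mul_exp_neg_mul_sq {l t : ℝ} (hl : 0 < l + (finrank ℝ E : ℝ) / 2)
    (ht : 0 < t) :
    ∫ y : E, ‖y‖ ^ (2 * l) * exp (-t * ‖y‖ ^ (2 : ℝ)) =
      π ^ ((finrank ℝ E : ℝ) / 2) * Gamma (l + (finrank ℝ E : ℝ) / 2) /
        Gamma ((finrank ℝ E : ℝ) / 2) * t ^ (-(l + (finrank ℝ E : ℝ) / 2)) := by
  have hradial : ∫ r in Ioi (0 : ℝ), r ^ (finrank ℝ E - 1) •
      (r ^ (2 * l) * exp (-t * r ^ (2 : ℝ))) =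
      t ^ (-(l + (finrank ℝ E : ℝ) / 2)) * (1 / 2) * Gamma (l + (finrank ℝ E : ℝ) / 2) := by
    have hexp : ((finrank ℝ E : ℝ) - 1 + 2 * l + 1) / 2 = l + (finrank ℝ E : ℝ) / 2 := by ring
    rw [← hexp, ← neg_div, ← integral_rpow_mul_exp_neg_mul_rpow two_pos (by linarith) ht]
    refine setIntegral_congr_fun measurableSet_Ioi fun r (hr : 0 < r) => ?_
    rw [smul_eq_mul, ← mul_assoc, rpow_add hr, ← Real.rpow_natCast,
      Nat.cast_sub finrank_pos, Nat.cast_one]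
  rw [integral_fun_norm_addHaar volume fun r : ℝ => r ^ (2 * l) * exp (-t * r ^ (2 : ℝ)), hradial,
    nsmul_eq_mul, smul_eq_mul, ← mul_assoc, finrank_mul_volume_real_unitBall]
  ring

lemma lintegral_norm_rpow_mul_exp_neg_mul_sq {l t : ℝ} (hl : 0 < l + (finrank ℝ E : ℝ) / 2)
    (ht : 0 < t) :
    ∫⁻ y : E, .ofReal (‖y‖ ^ (2 * l) * exp (-t * ‖y‖ ^ (2 : ℝ))) =
      .ofReal (π ^ ((finrank ℝ E : ℝ) / 2) * Gamma (l + (finrank ℝ E : ℝ) / 2) /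
        Gamma ((finrank ℝ E : ℝ) / 2) * t ^ (-(l + (finrank ℝ E : ℝ) / 2))) := by
  have hval := integral_norm_rpow_mul_exp_neg_mul_sq (E := E) hl ht
  have hE : (0 : ℝ) < finrank ℝ E := Nat.cast_pos.2 finrank_pos
  rw [← hval, ofReal_integral_eq_lintegral_ofReal
    (.of_integral_ne_zero (hval.trans_ne (by positivity)))]
  exact Eventually.of_forall fun y => by positivity

lemma lintegral_norm_rpow_mul_exp_neg_one_add_sq_mul {l b t : ℝ}
    (hl : 0 < l + (finrank ℝ E : ℝ) / 2) (ht : 0 < t) :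
    ∫⁻ y : E, .ofReal (‖y‖ ^ (2 * l) * (t ^ (b - 1) * exp (-((1 + ‖y‖ ^ 2) * t)))) =
      .ofReal (π ^ ((finrank ℝ E : ℝ) / 2) * Gamma (l + (finrank ℝ E : ℝ) / 2) /
        Gamma ((finrank ℝ E : ℝ) / 2)) *
      .ofReal (t ^ (b - (l + (finrank ℝ E : ℝ) / 2) - 1) * exp (-(1 * t))) := by
  have hsplit (y : E) : ‖y‖ ^ (2 * l) * (t ^ (b - 1) * exp (-((1 + ‖y‖ ^ 2) * t))) =
      t ^ (b - 1) * exp (-(1 * t)) * (‖y‖ ^ (2 * l) * exp (-t * ‖y‖ ^ (2 : ℝ))) := by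
    rw [Real.rpow_two, show -((1 + ‖y‖ ^ 2) * t) = -(1 * t) + -t * ‖y‖ ^ 2 by ring, exp_add]
    ring
  have hpos : 0 ≤ t ^ (b - 1) * exp (-(1 * t)) := by positivity
  simp only [hsplit, ENNReal.ofReal_mul hpos]
  rw [lintegral_const_mul' _ _ ofReal_ne_top, lintegral_norm_rpow_mul_exp_neg_mul_sq hl ht,
    ← ENNReal.ofReal_mul hpos, ← ENNReal.ofReal_mul' (by positivity)]
  rw [show b - (l + (finrank ℝ E : ℝ) / 2) - 1 = b - 1 + -(l + (finrank ℝ E : ℝ) / 2) by ring,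
    rpow_add ht]
  ring_nf

-- Write `Γ(b) (1 + ‖y‖²)⁻ᵇ` as a Laplace transform and integrate the resulting Gaussians first.
lemma Gamma_mul_lintegral_norm_rpow_mul_one_add_sq_rpow {l b : ℝ}
    (hl : 0 < l + (finrank ℝ E : ℝ) / 2) (hb : l + (finrank ℝ E : ℝ) / 2 < b) :
    .ofReal (Gamma b) * ∫⁻ y : E, .ofReal (‖y‖ ^ (2 * l) * (1 + ‖y‖ ^ 2) ^ (-b)) =
      .ofReal (π ^ ((finrank ℝ E : ℝ) / 2) * Gamma (l + (finrank ℝ E : ℝ) / 2) /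
        Gamma ((finrank ℝ E : ℝ) / 2)) *
      .ofReal (Gamma (b - (l + (finrank ℝ E : ℝ) / 2))) := by
  have hb0 : 0 < b := hl.trans hb
  have hΓ := Gamma_pos_of_pos hb0
  calc
    _ = ∫⁻ y : E, ∫⁻ t in Ioi (0 : ℝ),
        .ofReal (‖y‖ ^ (2 * l) * (t ^ (b - 1) * exp (-((1 + ‖y‖ ^ 2) * t)))) := by
      rw [← lintegral_const_mul' _ _ ofReal_ne_top]
      refine lintegral_congr fun y => ?_
      have hy : 0 ≤ ‖y‖ ^ (2 * l) := by positivity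
      simp only [ENNReal.ofReal_mul hy]
      rw [lintegral_const_mul' _ _ ofReal_ne_top,
        lintegral_rpow_mul_exp_neg_mul_Ioi hb0 (by positivity), mul_left_comm,
        ← ENNReal.ofReal_mul hΓ.le, mul_comm (Gamma b)]
    _ = ∫⁻ t in Ioi (0 : ℝ), ∫⁻ y : E,
        .ofReal (‖y‖ ^ (2 * l) * (t ^ (b - 1) * exp (-((1 + ‖y‖ ^ 2) * t)))) :=
      lintegral_lintegral_swap (by unfold Function.uncurry; fun_prop)
    _ = _ := by
      rw [setLIntegral_congr_fun measurableSet_Ioi fun t ht =>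
        lintegral_norm_rpow_mul_exp_neg_one_add_sq_mul hl ht,
        lintegral_const_mul' _ _ ofReal_ne_top,
        lintegral_rpow_mul_exp_neg_mul_Ioi (sub_pos.2 hb) one_pos,
        Real.one_rpow, one_mul]

lemma sphereFactor_rpow_mul_chordalKernel_zero {E : Type*} [NormedAddCommGroup E] (d l : ℝ)
    (y : E) :
    (↑(sphereFactor y ^ d) * ↑(chordalKernel l 0 y) : ℝ≥0∞) =
      .ofReal (2 ^ (d + 2 * l)) * .ofReal (‖y‖ ^ (2 * l) * (1 + ‖y‖ ^ 2) ^ (-(d + l))) := by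
  have hy : 0 < 1 + ‖y‖ ^ 2 := by positivity
  rw [← ENNReal.coe_mul, ← ENNReal.ofReal_coe_nnreal, ← ENNReal.ofReal_mul (by positivity)]
  congr 1
  have hsq (c : ℝ) (hc : 0 ≤ c) : c ^ (2 * l) = (c ^ 2) ^ l := by
    rw [rpow_mul hc, Real.rpow_two]
  rw [chordalKernel]
  push_cast
  rw [coe_sphereFactor, coe_sphereFactor, norm_zero, dist_zero_left, rpow_add two_pos,
    hsq 2 two_pos.le, hsq _ (norm_nonneg y), neg_add, rpow_add hy, rpow_neg hy.le, rpow_neg hy.le,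
    div_rpow two_pos.le hy.le, mul_rpow (by positivity) (by positivity),
    show 2 / (1 + (0 : ℝ) ^ 2) * (2 / (1 + ‖y‖ ^ 2)) = 2 ^ 2 / (1 + ‖y‖ ^ 2) by ring,
    div_rpow (by positivity) hy.le]
  ring

lemma potential_chordalKernel_one_zero {l : ℝ} (hl : 0 < l + (finrank ℝ E : ℝ) / 2) :
    potential (sphereMeasure E) (chordalKernel l) 1 0 =
      .ofReal (2 ^ (finrank ℝ E + 2 * l) * (π ^ ((finrank ℝ E : ℝ) / 2) *
        (Gamma (l + (finrank ℝ E : ℝ) / 2) / Gamma (finrank ℝ E + l)))) := by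
  have hE : (0 : ℝ) < finrank ℝ E := Nat.cast_pos.2 finrank_pos
  have hΓ : 0 < Gamma ((finrank ℝ E : ℝ) / 2) := Gamma_pos_of_pos (half_pos hE)
  have hΓd : 0 < Gamma (finrank ℝ E + l) := Gamma_pos_of_pos (by linarith)
  have hbeta := Gamma_mul_lintegral_norm_rpow_mul_one_add_sq_rpow (E := E) (b := finrank ℝ E + l) hl
    (by linarith)
  rw [show finrank ℝ E + l - (l + (finrank ℝ E : ℝ) / 2) = (finrank ℝ E : ℝ) / 2 by ring,
    ← ENNReal.ofReal_mul (by positivity), div_mul_cancel₀ _ hΓ.ne',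
    ← ENNReal.eq_div_iff (ofReal_pos.2 hΓd).ne' ofReal_ne_top, ← ofReal_div_of_pos hΓd,
    mul_div_assoc] at hbeta
  rw [potential, lintegral_sphereMeasure]
  simp only [Pi.one_apply, mul_one, sphereFactor_rpow_mul_chordalKernel_zero]
  rw [lintegral_const_mul' _ _ ofReal_ne_top, hbeta, ← ENNReal.ofReal_mul (by positivity)]

lemma sphereMeasure_univ :
    sphereMeasure E univ =
      .ofReal (2 ^ (finrank ℝ E : ℝ) * (π ^ ((finrank ℝ E : ℝ) / 2) *
        (Gamma ((finrank ℝ E : ℝ) / 2) / Gamma (finrank ℝ E)))) := by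
  have hE : (0 : ℝ) < finrank ℝ E := Nat.cast_pos.2 finrank_pos
  have hzero := potential_chordalKernel_one_zero (E := E) (l := 0) (by positivity)
  simpa [potential, chordalKernel] using hzero

end GammaIntegrals

section Duality

variable {X : Type*} [MeasurableSpace X] {μ : Measure X} {V : X → ℝ≥0∞} {c : ℝ≥0∞} {p q : ℝ}

lemma antitone_rpow_of_nonpos (hq : q ≤ 0) : Antitone fun z : ℝ≥0∞ => z ^ q := fun z w hzw => by
  have hinv (z : ℝ≥0∞) : z ^ q = (z ^ (-q))⁻¹ := by rw [← ENNReal.rpow_neg, neg_neg]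
  simp only [hinv]
  exact ENNReal.inv_le_inv.2 (ENNReal.rpow_le_rpow hzw (neg_nonneg.2 hq))

lemma rpow_sub_one_mul_self_le (hq : q ≤ 1) (z : ℝ≥0∞) : z ^ (q - 1) * z ≤ z ^ q := by
  rcases eq_or_ne z 0 with rfl | hz
  · simp
  rcases eq_or_ne z ∞ with rfl | hz'
  · rcases hq.lt_or_eq with hq | rfl
    · simp [ENNReal.top_rpow_of_neg (sub_neg.2 hq)]
    · simp
  · nth_rw 2 [← ENNReal.rpow_one z]
    rw [← ENNReal.rpow_add _ _ hz hz', sub_add_cancel]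

-- Test the hypothesis with `g = V ^ (q - 1)`, the equality case of the reverse Hölder inequality.
lemma le_rpow_lintegral_rpow_of_ne_top (hV : Measurable V) (hq : q < 0)
    (hpq : 1 / p + 1 / q = 1)
    (htest : ∀ g, Measurable g → c * (∫⁻ x, g x ^ p ∂μ) ^ (1 / p) ≤ ∫⁻ x, g x * V x ∂μ)
    (hfin : ∫⁻ x, V x ^ q ∂μ ≠ ∞) :
    c ≤ (∫⁻ x, V x ^ q ∂μ) ^ (1 / q) := by
  rcases eq_or_ne (∫⁻ x, V x ^ q ∂μ) 0 with hzero | hzero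
  · rw [hzero, ENNReal.zero_rpow_of_neg (one_div_neg.2 hq)]
    exact le_top
  have hp : p ≠ 0 := by
    rintro rfl
    linarith [one_div_neg.2 hq, _root_.div_zero (1 : ℝ)]
  have hexp : (q - 1) * p = q := by
    have := hq.ne
    field_simp at hpq
    linarith
  have hpower := (htest _ (hV.pow_const (q - 1))).trans
    (lintegral_mono fun x => rpow_sub_one_mul_self_le (by linarith) (V x))
  simp only [← ENNReal.rpow_mul, hexp] at hpower
  rw [show 1 / q = 1 - 1 / p by linarith, ENNReal.rpow_sub _ _ hzero hfin, ENNReal.rpow_one]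
  exact (ENNReal.le_div_iff_mul_le (by simp [hzero, hfin]) (by simp [hzero, hfin])).2 hpower

lemma exists_pos_lintegral_rpow_ne_top (μ : Measure X) [SigmaFinite μ] (hq : q ≠ 0) :
    ∃ h : X → ℝ≥0, Measurable h ∧ (∀ x, 0 < h x) ∧ ∫⁻ x, (h x : ℝ≥0∞) ^ q ∂μ ≠ ∞ := by
  obtain ⟨g, hgpos, hg, hgint⟩ := exists_pos_lintegral_lt_of_sigmaFinite μ one_ne_zero
  refine ⟨fun x => g x ^ (1 / q), hg.pow_const _, fun x => NNReal.rpow_pos (hgpos x), ?_⟩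
  simp_rw [ENNReal.coe_rpow_of_ne_zero (hgpos _).ne', ← ENNReal.rpow_mul, one_div_mul_cancel hq,
    ENNReal.rpow_one]
  exact ne_top_of_lt hgint

lemma tendsto_lintegral_add_inv_mul_rpow (hV : Measurable V) {h : X → ℝ≥0} (hh : Measurable h)
    (hq : q ≤ 0) :
    Tendsto (fun k : ℕ => ∫⁻ x, (V x + (k : ℝ≥0∞)⁻¹ * h x) ^ q ∂μ) atTop
      (𝓝 (∫⁻ x, V x ^ q ∂μ)) := by
  refine lintegral_tendsto_of_tendsto_of_monotone (fun k => ?_) ?_ ?_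
  · exact ((hV.add (hh.coe_nnreal_ennreal.const_mul _)).pow_const q).aemeasurable
  · refine Eventually.of_forall fun x i j hij => antitone_rpow_of_nonpos hq ?_
    gcongr
  · refine Eventually.of_forall fun x => (ENNReal.continuous_rpow_const.tendsto _).comp ?_
    simpa using tendsto_const_nhds.add
      (ENNReal.Tendsto.mul_const ENNReal.tendsto_inv_nat_nhds_zero (Or.inr (coe_ne_top (r := h x))))

theorem le_rpow_lintegral_rpow_of_forall_mul_le [SigmaFinite μ] (hV : Measurable V) (hq : q < 0)
    (hpq : 1 / p + 1 / q = 1)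
    (htest : ∀ g, Measurable g → c * (∫⁻ x, g x ^ p ∂μ) ^ (1 / p) ≤ ∫⁻ x, g x * V x ∂μ) :
    c ≤ (∫⁻ x, V x ^ q ∂μ) ^ (1 / q) := by
  obtain ⟨h, hh, hpos, hfin⟩ := exists_pos_lintegral_rpow_ne_top μ hq.ne
  refine ge_of_tendsto ((ENNReal.continuous_rpow_const.tendsto _).comp
    (tendsto_lintegral_add_inv_mul_rpow hV hh hq.le)) (Eventually.of_forall fun k => ?_)
  refine le_rpow_lintegral_rpow_of_ne_top (hV.add (hh.coe_nnreal_ennreal.const_mul _)) hq hpq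
    (fun g hg => (htest g hg).trans (lintegral_mono fun x => by gcongr; exact le_self_add)) ?_
  refine ne_top_of_le_ne_top ?_ (lintegral_mono fun x => antitone_rpow_of_nonpos hq.le le_add_self)
  simp_rw [ENNReal.mul_rpow_of_ne_zero (ENNReal.inv_ne_zero.2 (natCast_ne_top k))
    (coe_ne_zero.2 (hpos _).ne'), ENNReal.inv_rpow, ← ENNReal.rpow_neg]
  rw [lintegral_const_mul' _ _ (rpow_ne_top_of_nonneg (by linarith) (natCast_ne_top k))]
  exact mul_ne_top (rpow_ne_top_of_nonneg (by linarith) (natCast_ne_top k)) hfin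

end Duality

section RieszPotential

open Module

/-- The Riesz kernel `|x - y| ^ s`; the operator `I_α` on `ℝⁿ` has exponent `s = α - n`. -/
noncomputable def rieszKernel {E : Type*} [NormedAddCommGroup E] (s : ℝ) (x y : E) : ℝ≥0 :=
  nndist x y ^ s

lemma chordalKernel_eq_mul_rieszKernel {E : Type*} [NormedAddCommGroup E] (l : ℝ) (x y : E) :
    chordalKernel l x y = sphereFactor x ^ l * sphereFactor y ^ l * rieszKernel (2 * l) x y := by
  rw [chordalKernel, rieszKernel, NNReal.mul_rpow, NNReal.mul_rpow, NNReal.rpow_mul,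
    NNReal.rpow_two]

variable {E : Type*} [NormedAddCommGroup E] [InnerProductSpace ℝ E] [MeasurableSpace E]
  [BorelSpace E]

/-- The density on the sphere obtained from a density `f` on Euclidean space by the change of
variables of stereographic projection, for the kernel of exponent `2 * l`. -/
noncomputable def sphereDensity (l : ℝ) (f : E → ℝ≥0∞) (x : E) : ℝ≥0∞ :=
  ((sphereFactor x ^ (finrank ℝ E + l))⁻¹ : ℝ≥0) * f x

lemma measurable_sphereDensity (l : ℝ) {f : E → ℝ≥0∞} (hf : Measurable f) :
    Measurable (sphereDensity l f) :=
  (measurable_sphereFactor.pow_const _).inv.coe_nnreal_ennreal.mul hf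

variable [FiniteDimensional ℝ E]

lemma measurable_rieszKernel (s : ℝ) :
    Measurable (Function.uncurry (rieszKernel s : E → E → ℝ≥0)) :=
  measurable_nndist.pow_const s

lemma lintegral_sphereDensity_rpow {l p : ℝ} (hp : 0 ≤ p)
    (hpd : (finrank ℝ E + l) * p = finrank ℝ E) (f : E → ℝ≥0∞) :
    ∫⁻ x, sphereDensity l f x ^ p ∂sphereMeasure E = ∫⁻ x, f x ^ p := by
  rw [lintegral_sphereMeasure]
  refine lintegral_congr fun x => ?_
  have hx : sphereFactor x ^ (finrank ℝ E : ℝ) ≠ 0 := (NNReal.rpow_pos (sphereFactor_pos x)).ne'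
  rw [sphereDensity, ENNReal.mul_rpow_of_nonneg _ _ hp, ← ENNReal.coe_rpow_of_nonneg _ hp,
    NNReal.inv_rpow, ← NNReal.rpow_mul, hpd, ← mul_assoc, ← ENNReal.coe_mul, mul_inv_cancel₀ hx,
    ENNReal.coe_one, one_mul]

lemma potential_sphereDensity (l : ℝ) (f : E → ℝ≥0∞) (x : E) :
    potential (sphereMeasure E) (chordalKernel l) (sphereDensity l f) x =
      ↑(sphereFactor x ^ l) * potential volume (rieszKernel (2 * l)) f x := by
  rw [potential, lintegral_sphereMeasure, potential, ← lintegral_const_mul' _ _ coe_ne_top]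
  refine lintegral_congr fun y => ?_
  simp only [sphereDensity, ← mul_assoc, ← ENNReal.coe_mul]
  congr 2
  have hy := sphereFactor_pos y
  have hyd := (NNReal.rpow_pos hy (p := finrank ℝ E)).ne'
  have hyl := (NNReal.rpow_pos hy (p := l)).ne'
  rw [chordalKernel_eq_mul_rieszKernel, NNReal.rpow_add hy.ne']
  field_simp

lemma energy_sphereDensity (l : ℝ) (f g : E → ℝ≥0∞) :
    energy (sphereMeasure E) (chordalKernel l) (sphereDensity l f) (sphereDensity l g) =
      energy volume (rieszKernel (2 * l)) f g := by
  rw [energy, lintegral_sphereMeasure]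
  refine lintegral_congr fun x => ?_
  have hx : (sphereFactor x ^ (finrank ℝ E + l)) ≠ 0 := (NNReal.rpow_pos (sphereFactor_pos x)).ne'
  have hcancel : (↑(sphereFactor x ^ (finrank ℝ E : ℝ)) *
      ↑(sphereFactor x ^ (finrank ℝ E + l))⁻¹ * ↑(sphereFactor x ^ l) : ℝ≥0∞) = 1 := by
    rw [← ENNReal.coe_mul, ← ENNReal.coe_mul, mul_right_comm,
      ← NNReal.rpow_add (sphereFactor_pos x).ne', mul_inv_cancel₀ hx, ENNReal.coe_one]
  rw [potential_sphereDensity, sphereDensity]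
  calc
    _ = ↑(sphereFactor x ^ (finrank ℝ E : ℝ)) * ↑(sphereFactor x ^ (finrank ℝ E + l))⁻¹ *
        ↑(sphereFactor x ^ l) * (f x * potential volume (rieszKernel (2 * l)) g x) := by ring
    _ = _ := by rw [hcancel, one_mul]

/-- The sharp constant `N*(d, α)` of the reversed Hardy–Littlewood–Sobolev inequality in
dimension `d`. -/
noncomputable def sharpConstant (d α : ℝ) : ℝ :=
  Real.pi ^ ((d - α) / 2) * (Real.Gamma (α / 2) / Real.Gamma ((d + α) / 2)) *
    (Real.Gamma (d / 2) / Real.Gamma d) ^ (-(α / d))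

lemma sharpConstant_nonneg {d α : ℝ} (hd : 0 < d) (hα : 0 < α) : 0 ≤ sharpConstant d α := by
  unfold sharpConstant
  positivity

lemma sphereConstant_rpow_mul_sharpConstant {d α : ℝ} (hd : 0 < d) :
    (2 ^ d * (Real.pi ^ (d / 2) * (Real.Gamma (d / 2) / Real.Gamma d))) ^ (α / d) *
      sharpConstant d α =
    2 ^ α * (Real.pi ^ (d / 2) * (Real.Gamma (α / 2) / Real.Gamma ((d + α) / 2))) := by
  have hR : 0 < Real.Gamma (d / 2) / Real.Gamma d :=
    div_pos (Real.Gamma_pos_of_pos (half_pos hd)) (Real.Gamma_pos_of_pos hd)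
  have hpi := Real.pi_pos
  have hpi_rpow : Real.pi ^ (d / 2) = Real.pi ^ (α / 2) * Real.pi ^ ((d - α) / 2) := by
    rw [← Real.rpow_add hpi]
    ring_nf
  have hR' := (Real.rpow_pos_of_pos hR (α / d)).ne'
  rw [sharpConstant, Real.mul_rpow (by positivity) (by positivity),
    Real.mul_rpow (by positivity) hR.le, ← Real.rpow_mul two_pos.le, ← Real.rpow_mul hpi.le,
    Real.rpow_neg hR.le, mul_div_cancel₀ _ hd.ne', div_mul_div_cancel₀' hd.ne',
    hpi_rpow]
  field_simp

variable [Nontrivial E]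

lemma sphereMeasure_univ_rpow_mul_sharpConstant {α : ℝ} (hα : 0 < α) :
    sphereMeasure E univ ^ (α / finrank ℝ E) * .ofReal (sharpConstant (finrank ℝ E) α) =
      potential (sphereMeasure E) (chordalKernel ((α - finrank ℝ E) / 2)) 1 0 := by
  have hE : (0 : ℝ) < finrank ℝ E := Nat.cast_pos.2 finrank_pos
  rw [potential_chordalKernel_one_zero (by linarith), sphereMeasure_univ,
    ENNReal.ofReal_rpow_of_pos (by positivity), ← ENNReal.ofReal_mul (by positivity),
    sphereConstant_rpow_mul_sharpConstant hE]
  ring_nf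

lemma sphereMeasure_univ_ne_zero : sphereMeasure E univ ≠ 0 := by
  have hE : (0 : ℝ) < finrank ℝ E := Nat.cast_pos.2 finrank_pos
  rw [sphereMeasure_univ, ne_eq, ENNReal.ofReal_eq_zero, not_le]
  positivity

theorem sharpConstant_mul_le_energy {α p : ℝ} (hα : finrank ℝ E < α)
    (hp : p = 2 * finrank ℝ E / (finrank ℝ E + α)) {f g : E → ℝ≥0∞} (hf : Measurable f)
    (hg : Measurable g) :
    .ofReal (sharpConstant (finrank ℝ E) α) *
        ((∫⁻ x, f x ^ p) ^ (1 / p) * (∫⁻ x, g x ^ p) ^ (1 / p)) ≤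
      energy volume (rieszKernel (α - finrank ℝ E)) f g := by
  have hE : (0 : ℝ) < finrank ℝ E := Nat.cast_pos.2 finrank_pos
  have hl : 0 < (α - finrank ℝ E) / 2 := half_pos (sub_pos.2 hα)
  have hpd : (finrank ℝ E + (α - finrank ℝ E) / 2) * p = finrank ℝ E := by
    rw [hp]
    field_simp [(by linarith : finrank ℝ E + α ≠ 0)]
    ring
  have hp0 : 0 < p := pos_of_exponents hE hl hpd
  have hsphere := mul_rpow_lintegral_mul_le_energy (isBoundedSymmKernel_chordalKernel hl.le)
    (isApproxHomogeneous_chordalKernel hl) hE hl hpd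
    (measurable_sphereDensity ((α - finrank ℝ E) / 2) hf)
    (measurable_sphereDensity ((α - finrank ℝ E) / 2) hg)
  have hexp : 2 / p - 1 = α / finrank ℝ E := by
    rw [hp]
    field_simp
    ring
  rwa [lintegral_sphereDensity_rpow hp0.le hpd, lintegral_sphereDensity_rpow hp0.le hpd,
    energy_sphereDensity, mul_div_cancel₀ _ two_ne_zero, hexp,
    ← sphereMeasure_univ_rpow_mul_sharpConstant (hE.trans hα), mul_assoc,
    ENNReal.mul_le_mul_iff_right
      (ENNReal.rpow_pos (pos_iff_ne_zero.2 sphereMeasure_univ_ne_zero) (measure_ne_top _ _)).ne'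
      (rpow_ne_top_of_nonneg (div_pos (hE.trans hα) hE).le (measure_ne_top _ _))] at hsphere

end RieszPotential

section EuclideanSpace

lemma rieszNeg_eq_potential (n : ℕ) (α : ℝ) {f : EuclideanSpace ℝ (Fin n) → ℝ}
    (hf : ∀ x, 0 ≤ f x) :
    rieszNeg n α f = potential volume (rieszKernel (α - n)) fun x => .ofReal (f x) := by
  ext x
  refine lintegral_congr fun y => ?_
  rw [ENNReal.ofReal_mul (hf y), mul_comm, ← ENNReal.ofReal_coe_nnreal, rieszKernel,
    NNReal.coe_rpow, coe_nndist]

lemma ofReal_integral_rpow_rpow {X : Type*} [MeasurableSpace X] {μ : Measure X} {p : ℝ}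
    (hp : 0 < p) {f : X → ℝ} (hf : ∀ x, 0 ≤ f x) (hint : Integrable (fun x => |f x| ^ p) μ) :
    ENNReal.ofReal ((∫ x, |f x| ^ p ∂μ) ^ (1 / p)) =
      (∫⁻ x, ENNReal.ofReal (f x) ^ p ∂μ) ^ (1 / p) := by
  have hnonneg (x : X) : 0 ≤ |f x| ^ p := by positivity
  rw [← ENNReal.ofReal_rpow_of_nonneg (integral_nonneg hnonneg) (by positivity),
    ofReal_integral_eq_lintegral_ofReal hint (Eventually.of_forall hnonneg)]
  congr 1
  exact lintegral_congr fun x => by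
    rw [abs_of_nonneg (hf x), ENNReal.ofReal_rpow_of_nonneg (hf x) hp.le]

end EuclideanSpace

end ReversedHLS

open Module ReversedHLS in
theorem sharp_reversed_HLS_Rn_general {E : Type*} [NormedAddCommGroup E] [InnerProductSpace ℝ E]
    [FiniteDimensional ℝ E] [Nontrivial E] [MeasurableSpace E] [BorelSpace E] {α p q : ℝ}
    (hα : finrank ℝ E < α) (hp : p = 2 * finrank ℝ E / (finrank ℝ E + α))
    (hq : q = 2 * finrank ℝ E / (finrank ℝ E - α)) {f : E → ℝ≥0∞} (hf : Measurable f) :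
    .ofReal (sharpConstant (finrank ℝ E) α) * (∫⁻ x, f x ^ p) ^ (1 / p) ≤
      (∫⁻ x, potential volume (rieszKernel (α - finrank ℝ E)) f x ^ q) ^ (1 / q) := by
  have hE : (0 : ℝ) < finrank ℝ E := Nat.cast_pos.2 finrank_pos
  have hdual : 1 / p + 1 / q = 1 := by
    rw [hp, hq, one_div_div, one_div_div, ← add_div]
    field_simp
    ring
  refine le_rpow_lintegral_rpow_of_forall_mul_le
    (measurable_potential (measurable_rieszKernel _) hf)
    (hq ▸ div_neg_of_pos_of_neg (by positivity) (sub_neg.2 hα)) hdual fun g hg => ?_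
  rw [mul_assoc, mul_comm (_ ^ (1 / p))]
  exact sharpConstant_mul_le_energy hα hp hg hf

/-- **Sharp reversed HLS inequality on `ℝⁿ`** (Corollary 1.3, inequality part):
for `1 ≤ n < α`, `p = 2n/(n+α)`, `q = 2n/(n-α)`, every nonnegative `f ∈ L^p(ℝⁿ)` satisfies
`‖I_α f‖_{L^q(ℝⁿ)} ≥ N*(n,α) ‖f‖_{L^p(ℝⁿ)}`, where
`N*(n,α) = π^((n-α)/2) Γ(α/2)/Γ((n+α)/2) (Γ(n/2)/Γ(n))^(-α/n)`. -/
theorem sharp_reversed_HLS_Rn (n : ℕ) (hn : 1 ≤ n) (α p q : ℝ)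
    (hα : (n : ℝ) < α)
    (hp : p = 2 * n / ((n : ℝ) + α)) (hq : q = 2 * n / ((n : ℝ) - α)) :
    ∀ f : EuclideanSpace ℝ (Fin n) → ℝ,
      Measurable f → (∀ x, 0 ≤ f x) → Integrable (fun x => |f x| ^ p) →
      ENNReal.ofReal
          ((Real.pi ^ (((n : ℝ) - α) / 2) * (Real.Gamma (α / 2) / Real.Gamma (((n : ℝ) + α) / 2)) *
              (Real.Gamma ((n : ℝ) / 2) / Real.Gamma (n : ℝ)) ^ (-(α / (n : ℝ)))) *
            (∫ x, |f x| ^ p) ^ (1 / p)) ≤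
        (∫⁻ x, (rieszNeg n α f x) ^ q) ^ (1 / q) := by
  intro f hf hf_nonneg hint
  have hn_pos : (0 : ℝ) < n := Nat.cast_pos.2 hn
  have hα_pos : 0 < α := hn_pos.trans hα
  have hp_pos : 0 < p := by rw [hp]; positivity
  have : Nontrivial (EuclideanSpace ℝ (Fin n)) :=
    Module.nontrivial_of_finrank_pos (R := ℝ) (by rwa [finrank_euclideanSpace_fin])
  rw [← ReversedHLS.sharpConstant,
    ENNReal.ofReal_mul (ReversedHLS.sharpConstant_nonneg hn_pos hα_pos),
    ReversedHLS.ofReal_integral_rpow_rpow hp_pos hf_nonneg hint,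
    ReversedHLS.rieszNeg_eq_potential n α hf_nonneg]
  simpa only [finrank_euclideanSpace_fin] using
    sharp_reversed_HLS_Rn_general (E := EuclideanSpace ℝ (Fin n)) (by simpa using hα)
      (by simpa using hp) (by simpa using hq) hf.ennreal_ofReal
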